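/- arXiv:2403.07629 — 2 statements merged into one kernel-verified Lean document; each statement's English description precedes it below -/
import Mathlib

section
/- For odd n ≥ 9, the strict inequality (n+1)·n·(n−1)·(n−3)²·(n−7)·(n²−7n+1)/2048 < c_8(RLT_n) holds if and only if n ≥ 39, where c_8(RLT_n) = (n+1)·n·(n−1)·(n−3)·(n−5)·(n−7)·(83n²−575n+510)/161280. In particular, for any doubly-regular tournament DR_n of order n ≥ 39 one has c_8(DR_n) < c_8(RLT_n), while c_8(RLT_n) < c_8(DR_n) for doubly-regular tournaments of orders 11 ≤ n ≤ 35. -/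
/-- A tournament on the vertex type `V`. -/
structure Tournament (V : Type*) where
  r : V → V → Prop
  dec : DecidableRel r
  irrefl : ∀ i, ¬ r i i
  total : ∀ i j, i ≠ j → (r i j ↔ ¬ r j i)

attribute [instance] Tournament.dec

/-- A doubly-regular tournament of order `4t+3`: every pair of distinct vertices
jointly dominates exactly `t` vertices. -/
def Tournament.IsDoublyRegular {V : Type*} (T : Tournament V) (t : ℕ) : Prop :=
  ∀ i j : V, i ≠ j → Nat.card {k : V // T.r i k ∧ T.r j k} = t

/-- The dominance relation of the regular locally transitive tournament `RLT_n`
on `ZMod n` (for odd `n`). -/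
def rltAdj (n : ℕ) (i j : ZMod n) : Prop :=
  (j - i).val ∈ Finset.Icc 1 ((n - 1) / 2)

/-- The number of directed `m`-cycles of the relation `r`: each `m`-cycle corresponds
to exactly `m` injective cyclic sequences (one for each rotation). -/
noncomputable def numCycles {V : Type*} (r : V → V → Prop) (m : ℕ) : ℕ :=
  Nat.card {γ : ZMod m → V // Function.Injective γ ∧ ∀ k, r (γ k) (γ (k + 1))} / m

/-!
A rooted `8`-cycle is an injective closed walk of length eight. In a tournament two vertices of a
closed walk can only coincide at cyclic distance three or four, and inclusion–exclusion over these
coincidences expresses the number of rooted `8`-cycles through entries of powers of the adjacency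
matrix `A`. As every pair of distinct vertices is joined by exactly one arc, the result is a sum
over the arcs of a weight `arcWeight A`, minus three times the sum of the squared diagonal entries
of `A ^ 4`.

For a doubly-regular tournament, `A ^ 2 = t A + (t + 1) Aᵀ`, so the weight is the same on all arcs.
For the regular locally transitive tournament the entries of the powers of `A` are polynomials in
the cyclic distance, and the sum of the weights telescopes. The two counts differ by a positive
factor times a cubic, which changes sign between `37` and `38`.
-/

section RootedCycles

variable {V : Type*}

/-- The number of `m`-cycles of the relation `r` with a distinguished starting vertex, that is, of
injective closed walks of length `m`. -/
noncomputable def numRootedCycles (r : V → V → Prop) (m : ℕ) : ℕ :=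
  Nat.card {γ : ZMod m → V // Function.Injective γ ∧ ∀ k, r (γ k) (γ (k + 1))}

theorem dvd_numRootedCycles (r : V → V → Prop) (m : ℕ) : m ∣ numRootedCycles r m := by
  let rotation : AddAction (ZMod m)
      {γ : ZMod m → V // Function.Injective γ ∧ ∀ k, r (γ k) (γ (k + 1))} :=
    { vadd := fun d γ => ⟨fun k => γ.1 (k + d), γ.2.1.comp (add_left_injective d),
        fun k => by simpa only [add_right_comm] using γ.2.2 (k + d)⟩
      zero_vadd := fun γ => Subtype.ext <| funext fun k => congrArg γ.1 (add_zero k)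
      add_vadd := fun d e γ => Subtype.ext <| funext fun k =>
        congrArg γ.1 (by rw [← add_assoc, add_right_comm]) }
  have free : ∀ γ : {γ : ZMod m → V // Function.Injective γ ∧ ∀ k, r (γ k) (γ (k + 1))},
      AddAction.stabilizer (ZMod m) γ = ⊥ := fun γ => (AddSubgroup.eq_bot_iff_forall _).2
    fun d hd => by simpa using γ.2.1 (congrFun (congrArg Subtype.val hd) 0 : γ.1 (0 + d) = γ.1 0)
  rw [numRootedCycles, Nat.card_congr (AddAction.selfEquivOrbitsQuotientProd free), Nat.card_prod,
    Nat.card_zmod]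
  exact dvd_mul_left _ _

theorem numCycles_mul_self (r : V → V → Prop) (m : ℕ) :
    numCycles r m * m = numRootedCycles r m :=
  Nat.div_mul_cancel (dvd_numRootedCycles r m)

end RootedCycles

section CycleExpansion

/-- The inclusion–exclusion expansion of the injectivity of a closed walk `γ` of length eight in a
tournament. An entry `(c, C)` is the term with coefficient `c` for the coincidences `γ i = γ j`,
`(i, j) ∈ C`. There is one entry per rotation class of patterns `C` that can occur, and `c` is
`(-1) ^ |C|` times the number of patterns in the class. -/
def cycleExpansion : List (ℤ × List (Fin 8 × Fin 8)) :=
  [(1, []),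
    (-8, [(0, 3)]), (-4, [(0, 4)]),
    (8, [(0, 3), (1, 4)]), (8, [(0, 3), (6, 1)]), (8, [(0, 3), (1, 5)]), (8, [(0, 4), (6, 1)]),
    (4, [(0, 4), (1, 5)]), (2, [(0, 4), (2, 6)]),
    (-8, [(0, 3), (6, 1), (7, 2)]), (-8, [(0, 4), (6, 1), (7, 2)]),
    (-8, [(0, 3), (1, 5), (2, 6)]), (-4, [(0, 4), (2, 6), (3, 7)]),
    (1, [(0, 4), (1, 5), (2, 6), (3, 7)])]

-- Deciding the identity for all `2 ^ 12` Boolean tables needs a large `Decidable` instance.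
set_option synthInstance.maxSize 1000 in
theorem sum_rotations_cycleExpansion (d : Fin 8 → Fin 8 → Bool)
    (symm : ∀ k, d (k + 4) k = d k (k + 4))
    (compat : ∀ k, d k (k + 3) → ¬ d (k + 3) (k + 6) ∧ ¬ d (k + 4) (k + 7) ∧ ¬ d k (k + 4) ∧
      ¬ d (k + 3) (k + 7)) :
    ∑ k, (cycleExpansion.map fun c => if ∀ e ∈ c.2, d (e.1 + k) (e.2 + k) then c.1 else 0).sum =
      if ∀ k, ¬ d k (k + 3) ∧ ¬ d k (k + 4) then 8 else 0 := by
  simp only [Fin.forall_fin_succ, cycleExpansion, Fin.sum_univ_eight, List.map_cons,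
    List.map_nil, List.forall_mem_cons, List.sum_cons, List.sum_nil] at *
  simp only [Fin.isValue, zero_add,
    Fin.succ_zero_eq_one, Fin.reduceAdd, Fin.succ_one_eq_two, Fin.reduceSucc, IsEmpty.forall_iff,
    and_true, Bool.not_eq_true, List.not_mem_nil, add_zero, implies_true, if_true] at *
  obtain ⟨h₀, h₁, h₂, h₃, -⟩ := symm
  simp only [h₀, h₁, h₂, h₃] at compat ⊢
  clear h₀ h₁ h₂ h₃
  generalize d 0 3 = s₀, d 1 4 = s₁, d 2 5 = s₂, d 3 6 = s₃, d 4 7 = s₄, d 5 0 = s₅,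
    d 6 1 = s₆, d 7 2 = s₇, d 0 4 = t₀, d 1 5 = t₁, d 2 6 = t₂, d 3 7 = t₃ at compat ⊢
  clear d
  revert s₀ s₁ s₂ s₃ s₄ s₅ s₆ s₇ t₀ t₁ t₂ t₃
  decide +kernel

theorem sum_rotations_closedWalk {V : Type*} [DecidableEq V] {r : V → V → Prop}
    (asymm : ∀ i j, r i j → ¬ r j i) {γ : Fin 8 → V} (walk : ∀ k, r (γ k) (γ (k + 1)))
    [Decidable (Function.Injective γ)] :
    ∑ k, (cycleExpansion.map fun c =>
        if ∀ e ∈ c.2, γ (e.1 + k) = γ (e.2 + k) then c.1 else 0).sum =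
      if Function.Injective γ then 8 else 0 := by
  have ne₁ (k) : γ k ≠ γ (k + 1) := fun h => asymm _ _ (walk k) (h ▸ h ▸ walk k)
  have ne₂ (k) : γ k ≠ γ (k + 2) := fun h => asymm _ _ (walk k) <| by
    simpa only [add_assoc, Fin.reduceAdd, ← h] using walk (k + 1)
  have injective_iff : (∀ k, ¬ γ k = γ (k + 3) ∧ ¬ γ k = γ (k + 4)) ↔ Function.Injective γ := by
    refine ⟨fun h i j hij => ?_, fun h k => ⟨fun e => ?_, fun e => ?_⟩⟩
    · by_contra hne
      have distance : j = i + 1 ∨ j = i + 2 ∨ j = i + 3 ∨ j = i + 4 ∨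
          i = j + 3 ∨ i = j + 2 ∨ i = j + 1 := by
        clear hij
        decide +revert
      rcases distance with rfl | rfl | rfl | rfl | rfl | rfl | rfl
      exacts [ne₁ _ hij, ne₂ _ hij, (h _).1 hij, (h _).2 hij, (h _).1 hij.symm, ne₂ _ hij.symm,
        ne₁ _ hij.symm]
    · exact absurd (h e) (by simp)
    · exact absurd (h e) (by simp)
  have compat (k) (h : γ k = γ (k + 3)) : γ (k + 3) ≠ γ (k + 6) ∧ γ (k + 4) ≠ γ (k + 7) ∧
      γ k ≠ γ (k + 4) ∧ γ (k + 3) ≠ γ (k + 7) := by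
    have step₃ := walk (k + 3)
    have step₇ := walk (k + 7)
    have ne₆ := ne₂ (k + 6)
    have ne₃ := ne₁ (k + 3)
    have ne₇ := ne₁ (k + 7)
    simp only [add_assoc, Fin.reduceAdd, add_zero] at step₃ step₇ ne₆ ne₃ ne₇
    exact ⟨fun e => ne₆ (e.symm.trans h.symm), fun e => asymm _ _ step₃ (h ▸ e ▸ step₇),
      fun e => ne₃ (h.symm.trans e), fun e => ne₇ (e.symm.trans h.symm)⟩
  simpa only [decide_eq_true_eq, injective_iff] using
    sum_rotations_cycleExpansion (fun i j => decide (γ i = γ j))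
      (fun k => by simp only [eq_comm])
      (fun k => by simpa only [decide_eq_true_eq] using compat k)

section ClosedWalkSum

variable {V R : Type*} [Fintype V] [DecidableEq V] [CommSemiring R]

/-- The sum of the weights `∏ A (γ k) (γ (k + 1))` of the closed walks `γ` of length eight with the
coincidences `γ i = γ j`, for `(i, j)` in `C`. -/
def closedWalkSum (A : Matrix V V R) (C : List (Fin 8 × Fin 8)) : R :=
  ∑ γ : Fin 8 → V with ∀ e ∈ C, γ e.1 = γ e.2, ∏ k, A (γ k) (γ (k + 1))

theorem closedWalkSum_rotate (A : Matrix V V R) (C : List (Fin 8 × Fin 8)) (k : Fin 8) :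
    ∑ γ : Fin 8 → V with ∀ e ∈ C, γ (e.1 + k) = γ (e.2 + k), ∏ i, A (γ i) (γ (i + 1)) =
      closedWalkSum A C := by
  refine Finset.sum_equiv ((Equiv.addRight k).symm.arrowCongr (Equiv.refl V))
    (fun γ => by simp) fun γ _ => Fintype.prod_equiv (Equiv.addRight k).symm _ _ fun i => ?_
  simp [add_right_comm]

theorem eight_mul_sum_closedWalkSum {S : Type*} [CommRing S] (A : Matrix V V S)
    (L : List (ℤ × List (Fin 8 × Fin 8))) :
    8 * (L.map fun c => c.1 * closedWalkSum A c.2).sum =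
      ∑ γ : Fin 8 → V, (∏ i, A (γ i) (γ (i + 1))) * ((∑ k, (L.map fun c =>
        if ∀ e ∈ c.2, γ (e.1 + k) = γ (e.2 + k) then c.1 else 0).sum : ℤ) : S) := by
  induction L with
  | nil => simp
  | cons c L ih =>
    have rotations : ∑ k : Fin 8, ∑ γ : Fin 8 → V with ∀ e ∈ c.2, γ (e.1 + k) = γ (e.2 + k),
        (∏ i, A (γ i) (γ (i + 1))) * (c.1 : S) = 8 * (c.1 * closedWalkSum A c.2) := by
      simp only [← Finset.sum_mul, closedWalkSum_rotate, Finset.sum_const, Finset.card_univ,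
        Fintype.card_fin, nsmul_eq_mul, Nat.cast_ofNat]
      ring
    simp only [List.map_cons, List.sum_cons, Finset.sum_add_distrib, Int.cast_add, mul_add, ih,
      ← rotations, Finset.sum_filter]
    rw [Finset.sum_comm]
    simp only [Int.cast_sum, Int.cast_ite, Int.cast_zero, Finset.mul_sum, mul_ite, mul_zero]

end ClosedWalkSum

/-- The adjacency matrix of the relation `r`. -/
def adjacencyMatrix {V : Type*} (r : V → V → Prop) [DecidableRel r] : Matrix V V ℚ :=
  Matrix.of fun i j => if r i j then 1 else 0

theorem adjacencyMatrix_apply {V : Type*} (r : V → V → Prop) [DecidableRel r] (i j : V) :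
    adjacencyMatrix r i j = if r i j then 1 else 0 :=
  rfl

theorem adjacencyMatrix_mul_self_apply {V : Type*} (r : V → V → Prop) [DecidableRel r] (i j : V) :
    adjacencyMatrix r i j * adjacencyMatrix r i j = adjacencyMatrix r i j := by
  simp [adjacencyMatrix_apply]

theorem numRootedCycles_eight_eq_sum_closedWalkSum {V : Type*} [Fintype V] [DecidableEq V]
    {r : V → V → Prop} [DecidableRel r] (asymm : ∀ i j, r i j → ¬ r j i) :
    (numRootedCycles r 8 : ℚ) =
      (cycleExpansion.map fun c => c.1 * closedWalkSum (adjacencyMatrix r) c.2).sum := by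
  classical
  have prod_eq (γ : Fin 8 → V) :
      ∏ k, adjacencyMatrix r (γ k) (γ (k + 1)) =
        if ∀ k, r (γ k) (γ (k + 1)) then 1 else 0 := by
    simp only [adjacencyMatrix_apply, Finset.prod_boole, Finset.mem_univ, true_imp_iff]
  have card_eq : (numRootedCycles r 8 : ℚ) = ∑ γ : Fin 8 → V,
      if (∀ k, r (γ k) (γ (k + 1))) ∧ Function.Injective γ then 1 else 0 := by
    rw [Finset.sum_boole, ← Fintype.card_subtype, ← Nat.card_eq_fintype_card]
    simp only [and_comm]
    rfl
  have key : 8 * (numRootedCycles r 8 : ℚ) =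
      8 * (cycleExpansion.map fun c => c.1 * closedWalkSum (adjacencyMatrix r) c.2).sum := by
    rw [eight_mul_sum_closedWalkSum, card_eq, Finset.mul_sum]
    refine Finset.sum_congr rfl fun γ _ => ?_
    by_cases walk : ∀ k, r (γ k) (γ (k + 1))
    · rw [prod_eq, sum_rotations_closedWalk asymm walk]
      simp [walk]
    · simp [prod_eq, walk]
  linarith

section ClosedWalkSumPatterns

open Matrix

theorem sum_pi_fin_eight {V M : Type*} [Fintype V] [AddCommMonoid M] (F : (Fin 8 → V) → M) :
    ∑ γ, F γ = ∑ a, ∑ b, ∑ c, ∑ d, ∑ e, ∑ f, ∑ g, ∑ h, F ![a, b, c, d, e, f, g, h] := by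
  have split_head (k : ℕ) (G : (Fin (k + 1) → V) → M) :
      ∑ γ, G γ = ∑ a, ∑ γ : Fin k → V, G (Matrix.vecCons a γ) := by
    rw [← (Fin.consEquiv fun _ => V).sum_comp, Fintype.sum_prod_type]
    rfl
  simp only [split_head, Fintype.sum_unique, Matrix.empty_eq]

variable {V R : Type*} [Fintype V] [DecidableEq V] [CommSemiring R] (A : Matrix V V R)

theorem closedWalkSum_eq_sum (C : List (Fin 8 × Fin 8)) :
    closedWalkSum A C = ∑ a, ∑ b, ∑ c, ∑ d, ∑ e, ∑ f, ∑ g, ∑ h,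
      if ∀ x ∈ C, ![a, b, c, d, e, f, g, h] x.1 = ![a, b, c, d, e, f, g, h] x.2
      then A a b * A b c * A c d * A d e * A e f * A f g * A g h * A h a else 0 := by
  rw [closedWalkSum, Finset.sum_filter, sum_pi_fin_eight]
  simp only [Fin.prod_univ_eight]
  rfl

theorem closedWalkSum_nil :
    closedWalkSum A [] = ∑ a, ∑ b, (A ^ 4) a b * (A ^ 4) b a := by
  have eq_pow : closedWalkSum A [] = ∑ a, (A ^ 8) a a := by
    simp only [closedWalkSum_eq_sum, List.not_mem_nil, IsEmpty.forall_iff, implies_true, if_true]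
    simp only [pow_succ', pow_zero, mul_one, Matrix.mul_apply, mul_assoc, Finset.mul_sum]
  simp only [eq_pow, pow_add A 4 4, Matrix.mul_apply]

theorem closedWalkSum_03 :
    closedWalkSum A [(0, 3)] =
      ∑ a, ∑ b, (A ^ 3) a a * ((A ^ 2) a b * (A ^ 3) b a) := by
  have eq_pow : closedWalkSum A [(0, 3)] = ∑ a, (A ^ 3) a a * (A ^ 5) a a := by
    simp only [closedWalkSum_eq_sum, List.forall_mem_cons, List.not_mem_nil, IsEmpty.forall_iff,
      implies_true, and_true, Matrix.cons_val, Finset.sum_ite_irrel, Finset.sum_const_zero,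
      Finset.sum_ite_eq, Finset.mem_univ, if_true]
    simp only [pow_succ', pow_zero, mul_one, Matrix.mul_apply, mul_assoc, Finset.sum_mul]
    simp only [Finset.mul_sum]
  simp only [eq_pow, pow_add A 2 3, Matrix.mul_apply, Finset.mul_sum]

theorem closedWalkSum_04 :
    closedWalkSum A [(0, 4)] = ∑ a, (A ^ 4) a a ^ 2 := by
  simp only [closedWalkSum_eq_sum, List.forall_mem_cons, List.not_mem_nil, IsEmpty.forall_iff,
    implies_true, and_true, Matrix.cons_val, Finset.sum_ite_irrel, Finset.sum_const_zero,
    Finset.sum_ite_eq, Finset.mem_univ, if_true]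
  simp only [sq (_ : R), pow_succ', pow_zero, mul_one, Matrix.mul_apply, mul_assoc, Finset.sum_mul]
  simp only [Finset.mul_sum]

theorem closedWalkSum_03_14 :
    closedWalkSum A [(0, 3), (1, 4)] = ∑ a, ∑ b, (A ⊙ A) a b * (A ^ 2) b a * (A ^ 4) b a := by
  simp only [closedWalkSum_eq_sum, List.forall_mem_cons, List.not_mem_nil, IsEmpty.forall_iff,
    implies_true, and_true, Matrix.cons_val, ite_and, Finset.sum_ite_irrel, Finset.sum_const_zero,
    Finset.sum_ite_eq, Finset.mem_univ, if_true]
  simp only [pow_succ', pow_zero, mul_one, Matrix.mul_apply, Matrix.hadamard_apply,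
    mul_assoc, Finset.sum_mul]
  simp only [Finset.mul_sum, mul_left_comm]

theorem closedWalkSum_03_61 :
    closedWalkSum A [(0, 3), (6, 1)] =
      ∑ a, ∑ b, A a b * (A ^ 2) b a * (A ^ 3) a b * (A ^ 2) b a := by
  simp only [closedWalkSum_eq_sum, List.forall_mem_cons, List.not_mem_nil, IsEmpty.forall_iff,
    implies_true, and_true, Matrix.cons_val, ite_and, Finset.sum_ite_irrel, Finset.sum_const_zero,
    Finset.sum_ite_eq, Finset.sum_ite_eq', Finset.mem_univ, if_true]
  simp only [pow_succ', pow_zero, mul_one, Matrix.mul_apply, mul_assoc, Finset.sum_mul]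
  simp only [Finset.mul_sum]

theorem closedWalkSum_03_15 :
    closedWalkSum A [(0, 3), (1, 5)] =
      ∑ a, ∑ b, A a b * (A ^ 2) b a * (A ^ 2) a b * (A ^ 3) b a := by
  simp only [closedWalkSum_eq_sum, List.forall_mem_cons, List.not_mem_nil, IsEmpty.forall_iff,
    implies_true, and_true, Matrix.cons_val, ite_and, Finset.sum_ite_irrel, Finset.sum_const_zero,
    Finset.sum_ite_eq, Finset.mem_univ, if_true]
  simp only [pow_succ', pow_zero, mul_one, Matrix.mul_apply, mul_assoc, Finset.sum_mul]
  simp only [Finset.mul_sum]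

theorem closedWalkSum_04_61 :
    closedWalkSum A [(0, 4), (6, 1)] =
      ∑ a, ∑ b, A a b * (A ^ 3) b a * (A ^ 2) a b * (A ^ 2) b a := by
  simp only [closedWalkSum_eq_sum, List.forall_mem_cons, List.not_mem_nil, IsEmpty.forall_iff,
    implies_true, and_true, Matrix.cons_val, ite_and, Finset.sum_ite_irrel, Finset.sum_const_zero,
    Finset.sum_ite_eq, Finset.sum_ite_eq', Finset.mem_univ, if_true]
  simp only [pow_succ', pow_zero, mul_one, Matrix.mul_apply, mul_assoc, Finset.sum_mul]
  simp only [Finset.mul_sum]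

theorem closedWalkSum_04_15 :
    closedWalkSum A [(0, 4), (1, 5)] = ∑ a, ∑ b, (A ⊙ A) a b * (A ^ 3) b a * (A ^ 3) b a := by
  simp only [closedWalkSum_eq_sum, List.forall_mem_cons, List.not_mem_nil, IsEmpty.forall_iff,
    implies_true, and_true, Matrix.cons_val, ite_and, Finset.sum_ite_irrel, Finset.sum_const_zero,
    Finset.sum_ite_eq, Finset.mem_univ, if_true]
  simp only [pow_succ', pow_zero, mul_one, Matrix.mul_apply, Matrix.hadamard_apply,
    mul_assoc, Finset.sum_mul]
  simp only [Finset.mul_sum, mul_left_comm]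

theorem closedWalkSum_04_26 :
    closedWalkSum A [(0, 4), (2, 6)] =
      ∑ a, ∑ b, (A ^ 2) a b * (A ^ 2) b a * (A ^ 2) a b * (A ^ 2) b a := by
  simp only [closedWalkSum_eq_sum, List.forall_mem_cons, List.not_mem_nil, IsEmpty.forall_iff,
    implies_true, and_true, Matrix.cons_val, ite_and, Finset.sum_ite_irrel, Finset.sum_const_zero,
    Finset.sum_ite_eq, Finset.mem_univ, if_true]
  refine Finset.sum_congr rfl fun a _ => Finset.sum_comm.trans ?_
  simp only [pow_succ', pow_zero, mul_one, Matrix.mul_apply, mul_assoc, Finset.sum_mul]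
  simp only [Finset.mul_sum]

theorem closedWalkSum_03_61_72 :
    closedWalkSum A [(0, 3), (6, 1), (7, 2)] =
      ∑ a, ∑ b, A a b * ((A ⊙ A) ^ 2) b a * (A ^ 3) a b := by
  simp only [closedWalkSum_eq_sum, List.forall_mem_cons, List.not_mem_nil, IsEmpty.forall_iff,
    implies_true, and_true, Matrix.cons_val, ite_and, Finset.sum_ite_irrel, Finset.sum_const_zero,
    Finset.sum_ite_eq, Finset.sum_ite_eq', Finset.mem_univ, if_true]
  simp only [pow_succ', pow_zero, mul_one, Matrix.mul_apply, Matrix.hadamard_apply,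
    mul_assoc, Finset.sum_mul]
  simp only [Finset.mul_sum, mul_comm, mul_left_comm]

theorem closedWalkSum_04_61_72 :
    closedWalkSum A [(0, 4), (6, 1), (7, 2)] =
      ∑ a, ∑ b, A a b * (A ⊙ A * (A ⊙ (A ^ 2))) b a * (A ^ 2) a b := by
  simp only [closedWalkSum_eq_sum, List.forall_mem_cons, List.not_mem_nil, IsEmpty.forall_iff,
    implies_true, and_true, Matrix.cons_val, ite_and, Finset.sum_ite_irrel, Finset.sum_const_zero,
    Finset.sum_ite_eq, Finset.sum_ite_eq', Finset.mem_univ, if_true]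
  simp only [pow_succ', pow_zero, mul_one, Matrix.mul_apply, Matrix.hadamard_apply,
    mul_assoc, Finset.sum_mul]
  simp only [Finset.mul_sum, mul_comm, mul_left_comm]

theorem closedWalkSum_03_15_26 :
    closedWalkSum A [(0, 3), (1, 5), (2, 6)] =
      ∑ a, ∑ b, A a b * (A ^ 2) a b * (A ⊙ A * (A ⊙ (A ^ 2))) b a := by
  simp only [closedWalkSum_eq_sum, List.forall_mem_cons, List.not_mem_nil, IsEmpty.forall_iff,
    implies_true, and_true, Matrix.cons_val, ite_and, Finset.sum_ite_irrel, Finset.sum_const_zero,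
    Finset.sum_ite_eq, Finset.mem_univ, if_true]
  refine Finset.sum_congr rfl fun a _ => Finset.sum_congr rfl fun b _ => Finset.sum_comm.trans ?_
  simp only [pow_succ', pow_zero, mul_one, Matrix.mul_apply, Matrix.hadamard_apply,
    mul_assoc, Finset.sum_mul]
  simp only [Finset.mul_sum, mul_left_comm]

theorem closedWalkSum_04_26_37 :
    closedWalkSum A [(0, 4), (2, 6), (3, 7)] =
      ∑ a, ∑ b, (A ^ 2) a b * ((A ⊙ A) ^ 2) b a * (A ^ 2) a b := by
  simp only [closedWalkSum_eq_sum, List.forall_mem_cons, List.not_mem_nil, IsEmpty.forall_iff,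
    implies_true, and_true, Matrix.cons_val, ite_and, Finset.sum_ite_irrel, Finset.sum_const_zero,
    Finset.sum_ite_eq, Finset.mem_univ, if_true]
  refine Finset.sum_congr rfl fun a _ => Finset.sum_comm.trans ?_
  simp only [pow_succ', pow_zero, mul_one, Matrix.mul_apply, Matrix.hadamard_apply,
    mul_assoc, Finset.sum_mul]
  simp only [Finset.mul_sum, mul_comm, mul_left_comm]

theorem closedWalkSum_04_15_26_37 :
    closedWalkSum A [(0, 4), (1, 5), (2, 6), (3, 7)] =
      ∑ a, ∑ b, ((A ⊙ A) ^ 2) a b * ((A ⊙ A) ^ 2) b a := by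
  have eq_pow : closedWalkSum A [(0, 4), (1, 5), (2, 6), (3, 7)] = ∑ a, ((A ⊙ A) ^ 4) a a := by
    simp only [closedWalkSum_eq_sum, List.forall_mem_cons, List.not_mem_nil, IsEmpty.forall_iff,
      implies_true, and_true, Matrix.cons_val, ite_and, Finset.sum_ite_irrel, Finset.sum_const_zero,
      Finset.sum_ite_eq, Finset.mem_univ, if_true]
    simp only [pow_succ', pow_zero, mul_one, Matrix.mul_apply, Matrix.hadamard_apply, mul_assoc]
    simp only [Finset.mul_sum, mul_left_comm]
  simp only [eq_pow, pow_add (A ⊙ A) 2 2, Matrix.mul_apply]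

end ClosedWalkSumPatterns

end CycleExpansion

section ArcWeight

open Matrix

theorem adjacencyMatrix_hadamard_self {V : Type*} (r : V → V → Prop) [DecidableRel r] :
    adjacencyMatrix r ⊙ adjacencyMatrix r = adjacencyMatrix r :=
  Matrix.ext (adjacencyMatrix_mul_self_apply r)

variable {V : Type*} [Fintype V]

theorem adjacencyMatrix_sq_apply_self [DecidableEq V] {r : V → V → Prop} [DecidableRel r]
    (asymm : ∀ i j, r i j → ¬ r j i) (a : V) : (adjacencyMatrix r ^ 2) a a = 0 := by
  simp only [sq, mul_apply, adjacencyMatrix_apply]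
  refine Finset.sum_eq_zero fun b _ => ?_
  by_cases h : r a b <;> simp [h, asymm a b]

theorem numRootedCycles_eight_eq_sum_pairs [DecidableEq V] {r : V → V → Prop} [DecidableRel r]
    (asymm : ∀ i j, r i j → ¬ r j i) {A : Matrix V V ℚ} (hA : A = adjacencyMatrix r) :
    (numRootedCycles r 8 : ℚ) =
      -4 * ∑ a, (A ^ 4) a a ^ 2 +
        (∑ a, ∑ b, ((A ^ 4) a b * (A ^ 4) b a - 8 * ((A ^ 3) a a * (A ^ 2) a b * (A ^ 3) b a)
          + 2 * ((A ^ 2) a b * (A ^ 2) b a) ^ 2 - 4 * ((A ^ 2) a b ^ 2 * (A ^ 2) b a)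
          + (A ^ 2) a b * (A ^ 2) b a) +
        ∑ a, ∑ b, A a b * (16 * ((A ^ 2) a b * (A ^ 2) b a * (A ^ 3) b a)
          + 8 * ((A ^ 2) b a ^ 2 * (A ^ 3) a b) + 8 * ((A ^ 2) b a * (A ^ 4) b a)
          + 4 * (A ^ 3) b a ^ 2 - 8 * ((A ^ 3) a b * (A ^ 2) b a)
          - 16 * ((A ^ 2) a b * (A * (A ⊙ (A ^ 2))) b a))) := by
  have idem : A ⊙ A = A := hA ▸ adjacencyMatrix_hadamard_self r
  rw [numRootedCycles_eight_eq_sum_closedWalkSum asymm, ← hA]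
  simp only [cycleExpansion, List.map_cons, List.map_nil, List.sum_cons, List.sum_nil,
    closedWalkSum_nil, closedWalkSum_03, closedWalkSum_04, closedWalkSum_03_14, closedWalkSum_03_61,
    closedWalkSum_03_15, closedWalkSum_04_61, closedWalkSum_04_15, closedWalkSum_04_26,
    closedWalkSum_03_61_72, closedWalkSum_04_61_72, closedWalkSum_03_15_26, closedWalkSum_04_26_37,
    closedWalkSum_04_15_26_37, idem, Int.cast_one, one_mul, Int.cast_neg, Int.cast_ofNat, add_zero]
  set D := ∑ a, (A ^ 4) a a ^ 2
  simp only [add_left_comm _ (-4 * D)]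
  simp only [Finset.mul_sum, ← Finset.sum_add_distrib]
  congr 1
  refine Finset.sum_congr rfl fun a _ => Finset.sum_congr rfl fun b _ => ?_
  ring

/-- The contribution of an arc `(a, b)` to the number of rooted `8`-cycles of a tournament with
adjacency matrix `A`. -/
def arcWeight {R : Type*} [DecidableEq V] [CommRing R] (A : Matrix V V R) (a b : V) : R :=
  2 * ((A ^ 4) a b * (A ^ 4) b a)
    - 8 * ((A ^ 3) a a * (A ^ 2) a b * (A ^ 3) b a + (A ^ 3) b b * (A ^ 2) b a * (A ^ 3) a b)
    + 4 * ((A ^ 2) a b * (A ^ 2) b a) ^ 2 + 16 * ((A ^ 2) a b * (A ^ 2) b a * (A ^ 3) b a)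
    + 8 * ((A ^ 2) b a ^ 2 * (A ^ 3) a b) + 8 * ((A ^ 2) b a * (A ^ 4) b a)
    + 4 * (A ^ 3) b a ^ 2 - 8 * ((A ^ 3) a b * (A ^ 2) b a)
    - 16 * ((A ^ 2) a b * (A * (A ⊙ (A ^ 2))) b a)
    - 4 * ((A ^ 2) a b * (A ^ 2) b a * ((A ^ 2) a b + (A ^ 2) b a))
    + 2 * ((A ^ 2) a b * (A ^ 2) b a)

omit [Fintype V] in
theorem Tournament.asymm (T : Tournament V) (i j : V) (h : T.r i j) : ¬ T.r j i :=
  (T.total i j fun e => T.irrefl j (e ▸ h)).1 h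

omit [Fintype V] in
theorem Tournament.adjacencyMatrix_apply_add_swap [DecidableEq V] (T : Tournament V) (a b : V) :
    adjacencyMatrix T.r a b + adjacencyMatrix T.r b a + (if a = b then 1 else 0) = 1 := by
  by_cases hab : a = b
  · simp [adjacencyMatrix_apply, hab, T.irrefl]
  · by_cases h : T.r b a <;> simp [adjacencyMatrix_apply, hab, h, T.total a b hab]

theorem Tournament.sum_sum_eq_sum_diag_add_sum_arcs (T : Tournament V) (F : V → V → ℚ) :
    ∑ a, ∑ b, F a b = ∑ a, F a a + ∑ a, ∑ b, adjacencyMatrix T.r a b * (F a b + F b a) := by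
  classical
  set A := adjacencyMatrix T.r with hA
  calc ∑ a, ∑ b, F a b
      = ∑ a, ∑ b, (A a b + A b a + if a = b then 1 else 0) * F a b := by
        simp only [hA, T.adjacencyMatrix_apply_add_swap, one_mul]
    _ = ∑ a, F a a + (∑ a, ∑ b, A a b * F a b + ∑ a, ∑ b, A b a * F a b) := by
        simp only [add_mul, ite_mul, one_mul, zero_mul, Finset.sum_add_distrib, Finset.sum_ite_eq,
          Finset.mem_univ, if_true]
        ring
    _ = ∑ a, F a a + ∑ a, ∑ b, A a b * (F a b + F b a) := by
        rw [Finset.sum_comm (f := fun a b => A b a * F a b)]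
        simp only [mul_add, Finset.sum_add_distrib]

theorem Tournament.numRootedCycles_eight_eq_sum_arcWeight [DecidableEq V] (T : Tournament V)
    {A : Matrix V V ℚ} (hA : A = adjacencyMatrix T.r) :
    (numRootedCycles T.r 8 : ℚ) =
      ∑ a, ∑ b, A a b * arcWeight A a b - 3 * ∑ a, (A ^ 4) a a ^ 2 := by
  have closed_two (a) : (A ^ 2) a a = 0 := hA ▸ adjacencyMatrix_sq_apply_self T.asymm a
  rw [numRootedCycles_eight_eq_sum_pairs T.asymm hA, T.sum_sum_eq_sum_diag_add_sum_arcs, ← hA]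
  have diag (a) : (A ^ 4) a a * (A ^ 4) a a - 8 * ((A ^ 3) a a * (A ^ 2) a a * (A ^ 3) a a)
      + 2 * ((A ^ 2) a a * (A ^ 2) a a) ^ 2 - 4 * ((A ^ 2) a a ^ 2 * (A ^ 2) a a)
      + (A ^ 2) a a * (A ^ 2) a a = (A ^ 4) a a ^ 2 := by rw [closed_two]; ring
  have arcs (X Y D : ℚ) : -4 * D + (D + X + Y) = X + Y - 3 * D := by ring
  simp only [diag]
  rw [arcs]
  simp only [← Finset.sum_add_distrib, ← mul_add]
  congr! 5 with a - b -
  rw [arcWeight]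
  ring

end ArcWeight

section Antidifference

variable {R G : Type*} [Ring R] [AddCommGroup G]

theorem sum_range_sub_of_antidifference {p P : R → G} (hP : ∀ x, P x - P (x - 1) = p x) (c : R)
    (m : ℕ) : ∑ k ∈ Finset.range m, p (c - k) = P c - P (c - m) := by
  have := Finset.sum_range_sub' (fun k : ℕ => P (c - k)) m
  simpa [← hP, sub_sub] using this

theorem sum_range_add_of_antidifference {q Q : R → G} (hQ : ∀ x, Q (x + 1) - Q x = q x) (c : R)
    (m : ℕ) : ∑ k ∈ Finset.range m, q (c + k) = Q (c + m) - Q c := by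
  have := Finset.sum_range_sub (fun k : ℕ => Q (c + k)) m
  simpa [← hQ, add_assoc] using this

end Antidifference

section RegularLocallyTransitive

open Matrix

instance (n : ℕ) : DecidableRel (rltAdj n) :=
  fun _ _ => inferInstanceAs (Decidable (_ ∈ Finset.Icc _ _))

variable {h : ℕ}

theorem rltAdj_iff {a b : ZMod (2 * h + 1)} :
    rltAdj (2 * h + 1) a b ↔ 1 ≤ (b - a).val ∧ (b - a).val ≤ h := by
  simp [rltAdj]

theorem rltAdj_add_natCast {x : ℕ} (hx : 1 ≤ x) (hxh : x ≤ h) (a : ZMod (2 * h + 1)) :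
    rltAdj (2 * h + 1) a (a + x) := by
  rw [rltAdj_iff, add_sub_cancel_left, ZMod.val_cast_of_lt (by omega)]
  exact ⟨hx, hxh⟩

theorem rltAdj_iff_not_swap {a b : ZMod (2 * h + 1)} (hab : a ≠ b) :
    rltAdj (2 * h + 1) a b ↔ ¬ rltAdj (2 * h + 1) b a := by
  have : NeZero (b - a) := ⟨sub_ne_zero.2 hab.symm⟩
  have hval := ZMod.val_neg_of_ne_zero (b - a)
  have hpos := (ZMod.val_ne_zero (b - a)).2 (NeZero.ne _)
  have hlt := ZMod.val_lt (b - a)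
  rw [neg_sub] at hval
  rw [rltAdj_iff, rltAdj_iff]
  omega

/-- The regular locally transitive tournament of order `2h + 1`. -/
def regularLocallyTransitive (h : ℕ) : Tournament (ZMod (2 * h + 1)) where
  r := rltAdj (2 * h + 1)
  dec := inferInstance
  irrefl a := by simp [rltAdj_iff]
  total _ _ := rltAdj_iff_not_swap

theorem not_rltAdj_natCast_add {x : ℕ} (hxh : x ≤ h) (a : ZMod (2 * h + 1)) :
    ¬ rltAdj (2 * h + 1) (a + x) a := by
  rcases x.eq_zero_or_pos with rfl | hx
  · simp [rltAdj_iff]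
  · exact (regularLocallyTransitive h).asymm _ _ (rltAdj_add_natCast hx hxh a)

/-- The adjacency matrix of the regular locally transitive tournament of order `2h + 1`. -/
abbrev rltMatrix (h : ℕ) : Matrix (ZMod (2 * h + 1)) (ZMod (2 * h + 1)) ℚ :=
  adjacencyMatrix (rltAdj (2 * h + 1))

theorem sum_rltMatrix_mul (a : ZMod (2 * h + 1)) (f : ZMod (2 * h + 1) → ℚ) :
    ∑ b, rltMatrix h a b * f b = ∑ k ∈ Finset.range h, f (a + (k + 1 : ℕ)) := by
  simp only [adjacencyMatrix_apply, ite_mul, one_mul, zero_mul, ← Finset.sum_filter]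
  refine (Finset.sum_nbij' (fun k => a + (k + 1 : ℕ)) (fun b => (b - a).val - 1)
    (fun k hk => ?_) (fun b hb => ?_) (fun k hk => ?_) (fun b hb => ?_) fun _ _ => rfl).symm
  · simpa using rltAdj_add_natCast k.succ_pos (Finset.mem_range.1 hk) a
  · have := rltAdj_iff.1 (Finset.mem_filter.1 hb).2
    exact Finset.mem_range.2 (by omega)
  · have := Finset.mem_range.1 hk
    rw [add_sub_cancel_left, ZMod.val_cast_of_lt (by omega), Nat.add_sub_cancel]
  · have := rltAdj_iff.1 (Finset.mem_filter.1 hb).2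
    rw [Nat.sub_add_cancel this.1, ZMod.natCast_zmod_val, add_sub_cancel]

/-- A matrix indexed by `ZMod (2 * h + 1)` has profile `(p, q)` if its `(a, b)` entry is `p x` when
`b` lies `x` steps ahead of `a`, `1 ≤ x ≤ h`, and `q x` when `b` lies `x` steps behind `a`,
`0 ≤ x ≤ h`. -/
structure HasProfile (M : Matrix (ZMod (2 * h + 1)) (ZMod (2 * h + 1)) ℚ) (p q : ℚ → ℚ) :
    Prop where
  ahead (a : ZMod (2 * h + 1)) {x : ℕ} (hx : 1 ≤ x) (hxh : x ≤ h) : M a (a + x) = p x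
  behind (a : ZMod (2 * h + 1)) {x : ℕ} (hxh : x ≤ h) : M (a + x) a = q x

theorem hasProfile_rltMatrix : HasProfile (rltMatrix h) (fun _ => 1) (fun _ => 0) where
  ahead a _ hx hxh := if_pos (rltAdj_add_natCast hx hxh a)
  behind a _ hxh := if_neg (not_rltAdj_natCast_add hxh a)

section Product

variable {M : Matrix (ZMod (2 * h + 1)) (ZMod (2 * h + 1)) ℚ} {p q P Q : ℚ → ℚ}

theorem HasProfile.rltMatrix_mul_ahead (hM : HasProfile M p q)
    (hP : ∀ x, P x - P (x - 1) = p x) (hQ : ∀ x, Q (x + 1) - Q x = q x) (a : ZMod (2 * h + 1))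
    {x : ℕ} (hx : 1 ≤ x) (hxh : x ≤ h) :
    (rltMatrix h * M) a (a + x) = P (x - 1) - P 0 + (Q (h + 1 - x) - Q 0) := by
  obtain ⟨y, rfl⟩ := Nat.exists_eq_add_of_le' hx
  obtain ⟨m, rfl⟩ := Nat.exists_eq_add_of_le (y.le_succ.trans hxh)
  have before (k) (hk : k ∈ Finset.range y) :
      M (a + (k + 1 : ℕ)) (a + (y + 1 : ℕ)) = p (y - k) := by
    have hk := Finset.mem_range.1 hk
    rw [← Nat.cast_sub hk.le, ← hM.ahead (a + (k + 1 : ℕ)) (by omega) (by omega), add_assoc,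
      ← Nat.cast_add, show k + 1 + (y - k) = y + 1 by omega]
  have after (k) (hk : k ∈ Finset.range m) :
      M (a + (y + k + 1 : ℕ)) (a + (y + 1 : ℕ)) = q (0 + k) := by
    have hk := Finset.mem_range.1 hk
    rw [zero_add, ← hM.behind (a + (y + 1 : ℕ)) (show k ≤ y + m by omega)]
    congr 1
    push_cast
    ring
  rw [Matrix.mul_apply, sum_rltMatrix_mul, Finset.sum_range_add,
    Finset.sum_congr rfl before, Finset.sum_congr rfl after, sum_range_sub_of_antidifference hP,
    sum_range_add_of_antidifference hQ]
  push_cast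
  ring_nf

theorem HasProfile.rltMatrix_mul_behind (hM : HasProfile M p q)
    (hP : ∀ x, P x - P (x - 1) = p x) (hQ : ∀ x, Q (x + 1) - Q x = q x) (a : ZMod (2 * h + 1))
    {x : ℕ} (hxh : x ≤ h) :
    (rltMatrix h * M) (a + x) a = Q (h + 1) - Q (x + 1) + (P h - P (h - x)) := by
  obtain ⟨m, rfl⟩ := Nat.exists_eq_add_of_le' hxh
  have near (k) (hk : k ∈ Finset.range m) :
      M (a + x + (k + 1 : ℕ)) a = q (x + 1 + k) := by
    have hk := Finset.mem_range.1 hk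
    rw [add_assoc, ← Nat.cast_add, hM.behind a (by omega)]
    push_cast
    ring_nf
  have wrapped (k) (hk : k ∈ Finset.range x) :
      M (a + x + (m + k + 1 : ℕ)) a = p ((m + x : ℕ) - k) := by
    have hk := Finset.mem_range.1 hk
    have period := ZMod.natCast_self (2 * (m + x) + 1)
    rw [← Nat.cast_sub (by omega),
      ← hM.ahead (a + x + (m + k + 1 : ℕ)) (by omega) (show m + x - k ≤ m + x by omega),
      Nat.cast_sub (by omega)]
    congr 1
    push_cast at period ⊢
    linear_combination -period
  rw [Matrix.mul_apply, sum_rltMatrix_mul, Finset.sum_range_add,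
    Finset.sum_congr rfl near, Finset.sum_congr rfl wrapped, sum_range_sub_of_antidifference hP,
    sum_range_add_of_antidifference hQ]
  push_cast
  ring_nf

theorem HasProfile.rltMatrix_mul (hM : HasProfile M p q) {p' q' : ℚ → ℚ}
    (hP : ∀ x, P x - P (x - 1) = p x) (hQ : ∀ x, Q (x + 1) - Q x = q x)
    (hp' : ∀ x, p' x = P (x - 1) - P 0 + (Q (h + 1 - x) - Q 0))
    (hq' : ∀ x, q' x = Q (h + 1) - Q (x + 1) + (P h - P (h - x))) :
    HasProfile (rltMatrix h * M) p' q' where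
  ahead a _ hx hxh := by rw [hM.rltMatrix_mul_ahead hP hQ a hx hxh, hp']
  behind a _ hxh := by rw [hM.rltMatrix_mul_behind hP hQ a hxh, hq']

end Product

theorem hasProfile_rltMatrix_sq : HasProfile (rltMatrix h ^ 2) (fun x => x - 1) (fun x => x) := by
  rw [sq]
  exact hasProfile_rltMatrix.rltMatrix_mul (P := fun x => x) (Q := fun _ => 0) (fun x => by ring)
    (fun _ => by ring) (fun x => by ring) (fun x => by ring)

theorem hasProfile_rltMatrix_cube : HasProfile (rltMatrix h ^ 3)
    (fun x => (h ^ 2 + h) / 2 + 1 + x * (x - h - 2))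
    (fun x => (h ^ 2 + h) / 2 + x * (h - 1 - x)) := by
  rw [pow_succ']
  exact hasProfile_rltMatrix_sq.rltMatrix_mul (P := fun x => x * (x - 1) / 2)
    (Q := fun x => x * (x - 1) / 2) (fun x => by ring) (fun x => by ring) (fun x => by ring)
    (fun x => by ring)

theorem hasProfile_rltMatrix_pow_four : HasProfile (rltMatrix h ^ 4)
    (fun x => 2 * (h ^ 3 - h) / 3 +
      (4 * x ^ 3 - (6 * h + 15) * x ^ 2 + (12 * h + 17) * x - 6) / 6)
    (fun x => 2 * (h ^ 3 - h) / 3 + (4 * x ^ 3 - (6 * h - 9) * x ^ 2 - (12 * h - 5) * x) / 6) := by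
  rw [pow_succ']
  exact hasProfile_rltMatrix_cube.rltMatrix_mul
    (P := fun x => (2 * x ^ 3 - (3 * h + 3) * x ^ 2 + (3 * h ^ 2 + 1) * x) / 6)
    (Q := fun x => (-2 * x ^ 3 + 3 * h * x ^ 2 + (3 * h ^ 2 + 2) * x) / 6)
    (fun x => by ring) (fun x => by ring) (fun x => by ring) (fun x => by ring)

theorem HasProfile.hadamard {M N : Matrix (ZMod (2 * h + 1)) (ZMod (2 * h + 1)) ℚ}
    {p q p' q' : ℚ → ℚ} (hM : HasProfile M p q) (hN : HasProfile N p' q') :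
    HasProfile (M ⊙ N) (fun x => p x * p' x) (fun x => q x * q' x) where
  ahead a _ hx hxh := by rw [hadamard_apply, hM.ahead a hx hxh, hN.ahead a hx hxh]
  behind a _ hxh := by rw [hadamard_apply, hM.behind a hxh, hN.behind a hxh]

theorem hasProfile_rltMatrix_mul_hadamard :
    HasProfile (rltMatrix h * (rltMatrix h ⊙ (rltMatrix h ^ 2)))
      (fun x => (x - 1) * (x - 2) / 2) (fun x => x * (2 * h - 1 - x) / 2) :=
  (hasProfile_rltMatrix.hadamard hasProfile_rltMatrix_sq).rltMatrix_mul
    (P := fun x => x * (x - 1) / 2) (Q := fun _ => 0) (fun x => by ring) (fun x => by ring)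
    (fun x => by ring) (fun x => by ring)

theorem HasProfile.diag {M : Matrix (ZMod (2 * h + 1)) (ZMod (2 * h + 1)) ℚ} {p q : ℚ → ℚ}
    (hM : HasProfile M p q) (a : ZMod (2 * h + 1)) : M a a = q 0 := by
  simpa using hM.behind a h.zero_le

/-- A discrete antiderivative, in `x`, of the weight of an arc `(a, a + x)` of the regular locally
transitive tournament of order `2h + 1`. -/
def rltArcWeightSum (h x : ℚ) : ℚ :=
  (80 * x ^ 7 - (280 * h + 420) * x ^ 6 + (252 * h ^ 2 + 1092 * h + 1043) * x ^ 5
    + (280 * h ^ 3 - 630 * h ^ 2 - 1505 * h - 2625) * x ^ 4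
    - (560 * h ^ 4 + 840 * h ^ 3 - 3500 * h ^ 2 + 6930 * h - 18095) * x ^ 3
    - (420 * h ^ 4 - 3920 * h ^ 3 + 10920 * h ^ 2 - 7035 * h + 30975) * x ^ 2
    + (560 * h ^ 6 + 1750 * h ^ 4 - 420 * h ^ 3 + 10248 * h ^ 2 + 1428 * h + 14802) * x) / 630

theorem arcWeight_rltMatrix (a : ZMod (2 * h + 1)) {x : ℕ} (hx : 1 ≤ x) (hxh : x ≤ h) :
    arcWeight (rltMatrix h) a (a + x) = rltArcWeightSum h (x + 1) - rltArcWeightSum h x := by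
  simp only [arcWeight, hasProfile_rltMatrix_sq.ahead a hx hxh,
    hasProfile_rltMatrix_sq.behind a hxh, hasProfile_rltMatrix_cube.ahead a hx hxh,
    hasProfile_rltMatrix_cube.behind a hxh, hasProfile_rltMatrix_cube.diag,
    hasProfile_rltMatrix_pow_four.ahead a hx hxh, hasProfile_rltMatrix_pow_four.behind a hxh,
    hasProfile_rltMatrix_mul_hadamard.behind a hxh, rltArcWeightSum]
  ring

theorem numRootedCycles_rltAdj_eight (h : ℕ) :
    (numRootedCycles (rltAdj (2 * h + 1)) 8 : ℚ) =
      (2 * h + 2) * (2 * h + 1) * (2 * h) * (2 * h - 2) * (2 * h - 4) * (2 * h - 6) *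
        (83 * (2 * h + 1) ^ 2 - 575 * (2 * h + 1) + 510) / 20160 := by
  have arcs (a : ZMod (2 * h + 1)) : ∑ b, rltMatrix h a b * arcWeight (rltMatrix h) a b =
      rltArcWeightSum h (h + 1) - rltArcWeightSum h 1 := by
    rw [sum_rltMatrix_mul, Finset.sum_congr rfl fun k hk =>
      arcWeight_rltMatrix a k.succ_pos (Finset.mem_range.1 hk)]
    simpa using Finset.sum_range_sub (fun k : ℕ => rltArcWeightSum h (k + 1)) h
  have count := (regularLocallyTransitive h).numRootedCycles_eight_eq_sum_arcWeight
    (A := rltMatrix h) rfl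
  simp only [arcs, hasProfile_rltMatrix_pow_four.diag, Finset.sum_const, Finset.card_univ,
    ZMod.card, nsmul_eq_mul] at count
  refine count.trans ?_
  simp only [rltArcWeightSum]
  push_cast
  ring

end RegularLocallyTransitive

section DoublyRegular

open Matrix

variable {V : Type*} [Fintype V] {T : Tournament V} {t : ℕ}

theorem Tournament.IsDoublyRegular.sum_mul (hT : T.IsDoublyRegular t) {i j : V} (hij : i ≠ j) :
    ∑ k, adjacencyMatrix T.r i k * adjacencyMatrix T.r j k = t := by
  rw [← hT i j hij, Nat.card_eq_fintype_card, Fintype.card_subtype]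
  simp [adjacencyMatrix_apply, ← ite_and, and_comm]

-- The `d` out-neighbours of `i` span a tournament with `d * t` arcs, as each of them dominates
-- exactly `t` of the others; so `2 * d * t = d * (d - 1)`.
theorem Tournament.IsDoublyRegular.sum_row_mul_sub (hT : T.IsDoublyRegular t) (i : V) :
    (∑ k, adjacencyMatrix T.r i k) * (∑ k, adjacencyMatrix T.r i k - (2 * t + 1)) = 0 := by
  classical
  set A := adjacencyMatrix T.r with hA
  set d := ∑ k, A i k with hd
  have arcs : ∑ j, ∑ k, A i j * A i k * A j k = d * t := by
    rw [hd, Finset.sum_mul]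
    refine Finset.sum_congr rfl fun j _ => ?_
    by_cases hij : i = j
    · simp [hA, adjacencyMatrix_apply, ← hij, T.irrefl]
    · simp only [mul_assoc, ← Finset.mul_sum, hA, hT.sum_mul hij]
  have pairs : d * t + d * t + d = d * d := by
    have idem (j) : A i j * A i j = A i j := adjacencyMatrix_mul_self_apply T.r i j
    calc d * t + d * t + d
        = ∑ j, ∑ k, A i j * A i k * (A j k + A k j + if j = k then 1 else 0) := by
          have swapped : ∑ j, ∑ k, A i j * A i k * A k j = d * t := by
            rw [← arcs, Finset.sum_comm]
            simp only [mul_comm (A i _) (A i _)]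
          simp only [mul_add, Finset.sum_add_distrib, arcs, swapped, mul_ite, mul_one, mul_zero,
            Finset.sum_ite_eq, Finset.mem_univ, if_true, idem, hd]
      _ = d * d := by
          simp only [hA, T.adjacencyMatrix_apply_add_swap, mul_one, hd, Finset.sum_mul_sum]
  linear_combination -pairs

theorem Tournament.two_mul_sum_sum_adjacencyMatrix (T : Tournament V) :
    2 * ∑ i, ∑ j, adjacencyMatrix T.r i j = Fintype.card V * (Fintype.card V - 1) := by
  classical
  have total : ∑ i, ∑ j, (adjacencyMatrix T.r i j + adjacencyMatrix T.r j i
      + if i = j then 1 else 0) = (Fintype.card V : ℚ) * Fintype.card V := by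
    simp [T.adjacencyMatrix_apply_add_swap]
  simp only [Finset.sum_add_distrib, Finset.sum_ite_eq, Finset.mem_univ, if_true, Finset.sum_const,
    Finset.card_univ, nsmul_eq_mul, mul_one] at total
  rw [Finset.sum_comm (f := fun i j => adjacencyMatrix T.r j i)] at total
  linear_combination total

theorem Tournament.IsDoublyRegular.sum_row (hT : T.IsDoublyRegular t)
    (hV : Fintype.card V = 4 * t + 3) (i : V) : ∑ k, adjacencyMatrix T.r i k = 2 * t + 1 := by
  have le (i : V) : ∑ k, adjacencyMatrix T.r i k ≤ 2 * t + 1 := by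
    rcases mul_eq_zero.1 (hT.sum_row_mul_sub i) with h | h
    · rw [h]; positivity
    · exact (sub_eq_zero.1 h).le
  refine (Finset.sum_eq_sum_iff_of_le fun i _ => le i).1 ?_ i (Finset.mem_univ i)
  have total := T.two_mul_sum_sum_adjacencyMatrix
  rw [hV] at total
  rw [Finset.sum_const, Finset.card_univ, hV, nsmul_eq_mul]
  push_cast at total ⊢
  linear_combination total / 2

/-- The all-ones matrix. -/
def onesMatrix (V : Type*) : Matrix V V ℚ := of fun _ _ => 1

theorem Tournament.IsDoublyRegular.mul_onesMatrix (hT : T.IsDoublyRegular t)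
    (hV : Fintype.card V = 4 * t + 3) :
    adjacencyMatrix T.r * onesMatrix V = (2 * t + 1 : ℚ) • onesMatrix V := by
  ext i j
  simp [mul_apply, onesMatrix, hT.sum_row hV]

variable [DecidableEq V]

omit [Fintype V] in
theorem Tournament.transpose_adjacencyMatrix (T : Tournament V) :
    (adjacencyMatrix T.r)ᵀ = onesMatrix V - 1 - adjacencyMatrix T.r := by
  ext i j
  rw [transpose_apply, Matrix.sub_apply, Matrix.sub_apply, one_apply, onesMatrix, of_apply]
  linear_combination T.adjacencyMatrix_apply_add_swap i j

theorem Tournament.IsDoublyRegular.mul_transpose (hT : T.IsDoublyRegular t)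
    (hV : Fintype.card V = 4 * t + 3) : adjacencyMatrix T.r * (adjacencyMatrix T.r)ᵀ =
      (t + 1 : ℚ) • (1 : Matrix V V ℚ) + (t : ℚ) • onesMatrix V := by
  ext i j
  rw [mul_apply]
  by_cases hij : i = j
  · simp only [hij, transpose_apply, adjacencyMatrix_mul_self_apply, hT.sum_row hV,
      Matrix.add_apply, Matrix.smul_apply, one_apply_eq, onesMatrix, of_apply, smul_eq_mul]
    ring
  · simp [hT.sum_mul hij, onesMatrix, hij]

theorem Tournament.IsDoublyRegular.adjacencyMatrix_sq (hT : T.IsDoublyRegular t)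
    (hV : Fintype.card V = 4 * t + 3) : adjacencyMatrix T.r ^ 2 =
      (t : ℚ) • adjacencyMatrix T.r + (t + 1 : ℚ) • (adjacencyMatrix T.r)ᵀ := by
  have ones := T.transpose_adjacencyMatrix
  have product := hT.mul_transpose hV
  rw [ones, mul_sub, mul_sub, mul_one, hT.mul_onesMatrix hV, ← sq] at product
  have square : adjacencyMatrix T.r ^ 2 = (2 * t + 1 : ℚ) • onesMatrix V - adjacencyMatrix T.r -
      ((t + 1 : ℚ) • (1 : Matrix V V ℚ) + (t : ℚ) • onesMatrix V) := by
    rw [← product]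
    abel
  rw [square, ones]
  module

theorem Tournament.IsDoublyRegular.adjacencyMatrix_cube (hT : T.IsDoublyRegular t)
    (hV : Fintype.card V = 4 * t + 3) : adjacencyMatrix T.r ^ 3 =
      (t : ℚ) • adjacencyMatrix T.r ^ 2 +
        (t + 1 : ℚ) • ((t + 1 : ℚ) • (1 : Matrix V V ℚ) + (t : ℚ) • onesMatrix V) := by
  rw [← hT.mul_transpose hV, pow_succ']
  conv_lhs => rw [hT.adjacencyMatrix_sq hV, mul_add, mul_smul_comm, mul_smul_comm, ← sq]

theorem Tournament.IsDoublyRegular.adjacencyMatrix_pow_four (hT : T.IsDoublyRegular t)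
    (hV : Fintype.card V = 4 * t + 3) : adjacencyMatrix T.r ^ 4 =
      (t : ℚ) • adjacencyMatrix T.r ^ 3 + (t + 1 : ℚ) •
        ((t + 1 : ℚ) • adjacencyMatrix T.r + (t * (2 * t + 1) : ℚ) • onesMatrix V) := by
  rw [pow_succ']
  conv_lhs => rw [hT.adjacencyMatrix_cube hV, mul_add, mul_smul_comm, mul_smul_comm, ← pow_succ',
    mul_add, mul_smul_comm, mul_smul_comm, mul_one, hT.mul_onesMatrix hV, smul_smul]

theorem Tournament.IsDoublyRegular.mul_hadamard_sq (hT : T.IsDoublyRegular t)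
    (hV : Fintype.card V = 4 * t + 3) :
    adjacencyMatrix T.r * (adjacencyMatrix T.r ⊙ (adjacencyMatrix T.r ^ 2)) =
      (t : ℚ) • adjacencyMatrix T.r ^ 2 := by
  have hadamard : adjacencyMatrix T.r ⊙ (adjacencyMatrix T.r ^ 2) =
      (t : ℚ) • adjacencyMatrix T.r := by
    ext i j
    by_cases h : T.r i j <;> simp [hT.adjacencyMatrix_sq hV, adjacencyMatrix_apply, h, T.asymm i j]
  rw [hadamard, mul_smul_comm, ← sq]

theorem Tournament.IsDoublyRegular.pow_four_apply_self (hT : T.IsDoublyRegular t)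
    (hV : Fintype.card V = 4 * t + 3) (a : V) :
    (adjacencyMatrix T.r ^ 4) a a = 2 * t * (t + 1) * (2 * t + 1) := by
  simp only [hT.adjacencyMatrix_pow_four hV, hT.adjacencyMatrix_cube hV, hT.adjacencyMatrix_sq hV,
    onesMatrix, adjacencyMatrix_apply, Matrix.add_apply, Matrix.smul_apply, transpose_apply,
    of_apply, one_apply_eq, T.irrefl, if_false, smul_eq_mul]
  ring

theorem Tournament.IsDoublyRegular.arcWeight_adjacencyMatrix (hT : T.IsDoublyRegular t)
    (hV : Fintype.card V = 4 * t + 3) {a b : V} (hab : T.r a b) :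
    arcWeight (adjacencyMatrix T.r) a b =
      2 * t ^ 2 * (16 * t ^ 4 + 8 * t ^ 3 + 3 * t ^ 2 + 28 * t + 17) := by
  have ne : a ≠ b := fun h => T.irrefl b (h ▸ hab)
  rw [arcWeight, hT.mul_hadamard_sq hV]
  simp only [hT.adjacencyMatrix_pow_four hV, hT.adjacencyMatrix_cube hV, hT.adjacencyMatrix_sq hV,
    onesMatrix, adjacencyMatrix_apply, Matrix.add_apply, Matrix.smul_apply, transpose_apply,
    of_apply, one_apply_eq, one_apply_ne ne, one_apply_ne ne.symm, T.irrefl, hab, T.asymm a b hab,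
    if_true, if_false, smul_eq_mul]
  ring

omit [DecidableEq V] in
theorem Tournament.IsDoublyRegular.numRootedCycles_eight (hT : T.IsDoublyRegular t)
    (hV : Fintype.card V = 4 * t + 3) :
    (numRootedCycles T.r 8 : ℚ) = (4 * t + 4) * (4 * t + 3) * (4 * t + 2) * (4 * t) ^ 2 *
      (4 * t - 4) * ((4 * t + 3) ^ 2 - 7 * (4 * t + 3) + 1) / 256 := by
  classical
  set w : ℚ := 2 * t ^ 2 * (16 * t ^ 4 + 8 * t ^ 3 + 3 * t ^ 2 + 28 * t + 17) with hw
  have arcs (a b : V) : adjacencyMatrix T.r a b * arcWeight (adjacencyMatrix T.r) a b =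
      adjacencyMatrix T.r a b * w := by
    by_cases hab : T.r a b
    · rw [hT.arcWeight_adjacencyMatrix hV hab]
    · simp [adjacencyMatrix_apply, hab]
  have count := T.numRootedCycles_eight_eq_sum_arcWeight rfl
  simp only [arcs, ← Finset.sum_mul, hT.sum_row hV, hT.pow_four_apply_self hV, Finset.sum_const,
    Finset.card_univ, hV, nsmul_eq_mul, Nat.cast_add, Nat.cast_mul, Nat.cast_ofNat] at count
  rw [count, hw]
  ring

end DoublyRegular

section Comparison

/-- The number of `8`-cycles of a doubly-regular tournament, as a polynomial in its order. -/
def doublyRegularEightCycles (x : ℚ) : ℚ :=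
  (x + 1) * x * (x - 1) * (x - 3) ^ 2 * (x - 7) * (x ^ 2 - 7 * x + 1) / 2048

/-- The number of `8`-cycles of a regular locally transitive tournament, as a polynomial in its
order. -/
def rltEightCycles (x : ℚ) : ℚ :=
  (x + 1) * x * (x - 1) * (x - 3) * (x - 5) * (x - 7) * (83 * x ^ 2 - 575 * x + 510) / 161280

theorem Tournament.IsDoublyRegular.numCycles_eight {V : Type*} [Fintype V] {T : Tournament V}
    {t : ℕ} (hT : T.IsDoublyRegular t) (hV : Fintype.card V = 4 * t + 3) :
    (numCycles T.r 8 : ℚ) = doublyRegularEightCycles (Fintype.card V) := by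
  classical
  have rooted := hT.numRootedCycles_eight hV
  rw [← numCycles_mul_self] at rooted
  rw [hV, doublyRegularEightCycles]
  push_cast at rooted ⊢
  linear_combination rooted / 8

theorem numCycles_rltAdj_eight {n : ℕ} (hn : Odd n) :
    (numCycles (rltAdj n) 8 : ℚ) = rltEightCycles n := by
  obtain ⟨h, rfl⟩ := hn
  have rooted := numRootedCycles_rltAdj_eight h
  rw [← numCycles_mul_self] at rooted
  rw [rltEightCycles]
  push_cast at rooted ⊢
  linear_combination rooted / 8

/-- The cubic factor of `rltEightCycles - doublyRegularEightCycles`; its largest real root lies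
between `37` and `38`. -/
def discriminatingCubic (x : ℚ) : ℚ :=
  17 * x ^ 3 - 810 * x ^ 2 + 6610 * x - 9255

theorem rltEightCycles_sub_doublyRegularEightCycles (x : ℚ) :
    rltEightCycles x - doublyRegularEightCycles x =
      (x + 1) * x * (x - 1) * (x - 3) * (x - 7) / 645120 * discriminatingCubic x := by
  rw [rltEightCycles, doublyRegularEightCycles, discriminatingCubic]
  ring

theorem discriminatingCubic_pos {x : ℚ} (hx : 39 ≤ x) : 0 < discriminatingCubic x := by
  have expand : discriminatingCubic x =
      17 * (x - 39) ^ 3 + 1179 * (x - 39) ^ 2 + 21001 * (x - 39) + 24948 := by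
    rw [discriminatingCubic]
    ring
  have := sub_nonneg.2 hx
  rw [expand]
  positivity

theorem discriminatingCubic_neg {x : ℚ} (hx : 9 ≤ x) (hx' : x ≤ 37) :
    discriminatingCubic x < 0 := by
  have expand : discriminatingCubic x =
      -((x - 9) * (37 - x) * (17 * (x - 9) + 125)) - 339 * (x - 9) - 2982 := by
    rw [discriminatingCubic]
    ring
  have left := sub_nonneg.2 hx
  have right := sub_nonneg.2 hx'
  have : 0 ≤ (x - 9) * (37 - x) * (17 * (x - 9) + 125) :=
    mul_nonneg (mul_nonneg left right) (by linarith)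
  linarith

theorem quintic_factor_pos {x : ℚ} (hx : 7 < x) :
    0 < (x + 1) * x * (x - 1) * (x - 3) * (x - 7) / 645120 := by
  refine div_pos (mul_pos (mul_pos (mul_pos (mul_pos ?_ ?_) ?_) ?_) ?_) (by norm_num) <;> linarith

theorem doublyRegularEightCycles_lt_rltEightCycles {x : ℚ} (hx : 39 ≤ x) :
    doublyRegularEightCycles x < rltEightCycles x := by
  rw [← sub_pos, rltEightCycles_sub_doublyRegularEightCycles]
  exact mul_pos (quintic_factor_pos (by linarith)) (discriminatingCubic_pos hx)

theorem rltEightCycles_lt_doublyRegularEightCycles {x : ℚ} (hx : 9 ≤ x) (hx' : x ≤ 37) :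
    rltEightCycles x < doublyRegularEightCycles x := by
  rw [← sub_neg, rltEightCycles_sub_doublyRegularEightCycles]
  exact mul_neg_of_pos_of_neg (quintic_factor_pos (by linarith)) (discriminatingCubic_neg hx hx')

theorem doublyRegularEightCycles_lt_rltEightCycles_iff {n : ℕ} (hodd : Odd n) (hn : 9 ≤ n) :
    doublyRegularEightCycles n < rltEightCycles n ↔ 39 ≤ n := by
  refine ⟨fun hlt => ?_, fun h => doublyRegularEightCycles_lt_rltEightCycles (by exact_mod_cast h)⟩
  by_contra! h
  have h37 : n ≤ 37 := by
    obtain ⟨k, rfl⟩ := hodd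
    omega
  exact hlt.not_gt
    (rltEightCycles_lt_doublyRegularEightCycles (by exact_mod_cast hn) (by exact_mod_cast h37))

section Orders

variable {V : Type*} [Fintype V] {T : Tournament V} {t : ℕ}

theorem Tournament.IsDoublyRegular.numCycles_eight_lt_numCycles_rltAdj_eight
    (hT : T.IsDoublyRegular t) (hV : Fintype.card V = 4 * t + 3) (h39 : 39 ≤ Fintype.card V) :
    numCycles T.r 8 < numCycles (rltAdj (Fintype.card V)) 8 := by
  have hodd : Odd (Fintype.card V) := ⟨2 * t + 1, by omega⟩
  rw [← Nat.cast_lt (α := ℚ), hT.numCycles_eight hV, numCycles_rltAdj_eight hodd]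
  exact doublyRegularEightCycles_lt_rltEightCycles (by exact_mod_cast h39)

theorem Tournament.IsDoublyRegular.numCycles_rltAdj_eight_lt_numCycles_eight
    (hT : T.IsDoublyRegular t) (hV : Fintype.card V = 4 * t + 3) (h9 : 9 ≤ Fintype.card V)
    (h37 : Fintype.card V ≤ 37) :
    numCycles (rltAdj (Fintype.card V)) 8 < numCycles T.r 8 := by
  have hodd : Odd (Fintype.card V) := ⟨2 * t + 1, by omega⟩
  rw [← Nat.cast_lt (α := ℚ), hT.numCycles_eight hV, numCycles_rltAdj_eight hodd]
  exact rltEightCycles_lt_doublyRegularEightCycles (by exact_mod_cast h9) (by exact_mod_cast h37)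

end Orders

end Comparison

theorem eight_cycles_DR_lt_RLT_iff (n : ℕ) (hodd : Odd n) (hn : 9 ≤ n) :
    ((((n : ℚ) + 1) * n * ((n : ℚ) - 1) * ((n : ℚ) - 3) ^ 2 * ((n : ℚ) - 7) *
          ((n : ℚ) ^ 2 - 7 * n + 1)) / 2048 <
        (((n : ℚ) + 1) * n * ((n : ℚ) - 1) * ((n : ℚ) - 3) * ((n : ℚ) - 5) *
          ((n : ℚ) - 7) * (83 * (n : ℚ) ^ 2 - 575 * n + 510)) / 161280 ↔ 39 ≤ n) ∧
    (∀ t : ℕ, ∀ T : Tournament (Fin n), n = 4 * t + 3 → T.IsDoublyRegular t →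
      (39 ≤ n → numCycles T.r 8 < numCycles (rltAdj n) 8) ∧
      (11 ≤ n → n ≤ 35 → numCycles (rltAdj n) 8 < numCycles T.r 8)) := by
  refine ⟨doublyRegularEightCycles_lt_rltEightCycles_iff hodd hn, fun t T hnt hT => ?_⟩
  have hV : Fintype.card (Fin n) = 4 * t + 3 := (Fintype.card_fin n).trans hnt
  have rlt_lt := hT.numCycles_rltAdj_eight_lt_numCycles_eight hV
  have lt_rlt := hT.numCycles_eight_lt_numCycles_rltAdj_eight hV
  rw [Fintype.card_fin] at rlt_lt lt_rlt
  exact ⟨lt_rlt, fun _ hn35 => rlt_lt hn (hn35.trans (by norm_num))⟩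
end

section
/- For each odd n ≥ 1, in the regular locally transitive tournament RLT_n the number c_8^{(2)}(RLT_n,0) of closed walks of length 8 starting and ending at vertex 0 that contain exactly one occurrence of 0 as an intermediate vertex and no other repeated vertices equals (n+1)(n−1)(n−3)(n−5)(85n²−646n+837)/5760. -/
/-!
Write `n = 2m + 1`. Sending the residues above `m` to negative numbers identifies `RLT_{2m+1}` with
the interval `[-m, m]` of one tournament on `ℤ`, in which an arc only depends on the signs of its
ends and on the order of their absolute values. Hence the number of walks whose nonzero vertices
have a prescribed set `S ⊆ {1, …, m}` of absolute values depends only on the size of `S`, which is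
at most 6. Writing `g_j` for this number when `S` has size `j`, the count is `∑ j ≤ 6, (m choose j)
g_j`, a polynomial in `m` of degree at most 6, so it suffices to check the formula for `m ≤ 6`.
There the walks are counted by backtracking: forgetting the interior visit to `0` turns such a walk
into a simple path in which one step has been replaced by two steps through `0`.
-/

section TimedPath

variable {V : Type*}

/-- `x, u 0, …, u (r - 1), t` is a walk whose step number `k` obeys the relation `R (i + k)` and
whose intermediate vertices are distinct elements of `A`. -/
def IsTimedPath {r : ℕ} (R : ℕ → V → V → Prop) (t : V) (i : ℕ) (A : Set V) (x : V)
    (u : Fin r → V) : Prop :=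
  Function.Injective u ∧ (∀ k, u k ∈ A) ∧
    ∀ k : Fin (r + 1), R (i + k) ((Fin.cons x u : Fin (r + 1) → V) k)
      ((Fin.snoc u t : Fin (r + 1) → V) k)

lemma isTimedPath_zero {R : ℕ → V → V → Prop} {t x : V} {i : ℕ} {A : Set V} {u : Fin 0 → V} :
    IsTimedPath R t i A x u ↔ R i x t := by
  simp [IsTimedPath, Function.injective_of_subsingleton, Fin.snoc]

lemma isTimedPath_cons {r : ℕ} {R : ℕ → V → V → Prop} {t x a : V} {i : ℕ} {A : Set V}
    {u : Fin r → V} :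
    IsTimedPath R t i A x (Fin.cons a u : Fin (r + 1) → V) ↔
      (a ∈ A ∧ R i x a) ∧ IsTimedPath R t (i + 1) (A \ {a}) a u := by
  have hsnoc : (Fin.snoc (Fin.cons a u : Fin (r + 1) → V) t : Fin (r + 2) → V) =
      Fin.cons a (Fin.snoc u t : Fin (r + 1) → V) :=
    (Fin.cons_snoc_eq_snoc_cons a u t).symm
  have hsteps : (∀ k : Fin (r + 1), R (i + (k.succ : ℕ)) ((Fin.cons a u : Fin (r + 1) → V) k)
      ((Fin.snoc u t : Fin (r + 1) → V) k)) ↔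
      ∀ k : Fin (r + 1), R (i + 1 + k) ((Fin.cons a u : Fin (r + 1) → V) k)
        ((Fin.snoc u t : Fin (r + 1) → V) k) := by
    simp only [Fin.val_succ, add_assoc, add_comm 1]
  simp only [IsTimedPath, hsnoc, Fin.cons_injective_iff, Set.mem_range, not_exists,
    Fin.forall_fin_succ (n := r + 1), Fin.cons_zero, Fin.cons_succ, Fin.val_zero, add_zero, hsteps,
    Fin.forall_fin_succ (P := fun k => (Fin.cons a u : Fin (r + 1) → V) k ∈ A),
    Set.mem_sdiff, Set.mem_singleton_iff, forall_and]
  tauto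

/-- The number of timed paths, computed by backtracking. -/
def timedPathCount [DecidableEq V] (R : ℕ → V → V → Prop) [∀ i, DecidableRel (R i)] (t : V) :
    ℕ → ℕ → Finset V → V → ℕ
  | 0, i, _, x => if R i x t then 1 else 0
  | r + 1, i, A, x => ∑ a ∈ A with R i x a, timedPathCount R t r (i + 1) (A.erase a) a

lemma card_subtype_fin_succ [Fintype V] {r : ℕ} (P : (Fin (r + 1) → V) → Prop) :
    Nat.card {w // P w} = ∑ a : V, Nat.card {w : Fin r → V // P (Fin.cons a w)} := by
  rw [← Nat.card_sigma]
  exact Nat.card_congr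
    { toFun := fun w => ⟨w.1 0, Fin.tail w.1, by rw [Fin.cons_self_tail]; exact w.2⟩
      invFun := fun x => ⟨Fin.cons x.1 x.2.1, x.2.2⟩
      left_inv := fun w => by simp
      right_inv := fun _ => rfl }

lemma card_isTimedPath [Finite V] [DecidableEq V] (R : ℕ → V → V → Prop)
    [∀ i, DecidableRel (R i)] (t : V) (r i : ℕ) (A : Finset V) (x : V) :
    Nat.card {u : Fin r → V // IsTimedPath R t i A x u} = timedPathCount R t r i A x := by
  have := Fintype.ofFinite V
  induction r generalizing i A x with
  | zero =>
    simp only [isTimedPath_zero, timedPathCount]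
    split_ifs with h <;> simp [h]
  | succ r ih =>
    rw [card_subtype_fin_succ, timedPathCount, Finset.sum_filter, ← Finset.sum_subset A.subset_univ]
    · refine Finset.sum_congr rfl fun a ha => ?_
      rw [← ih]
      split_ifs with h <;> simp [isTimedPath_cons, ha, h]
    · intro a _ ha
      simp [isTimedPath_cons, ha]

end TimedPath

section FigureEight

variable {V W : Type*} {r : ℕ}

/-- A closed walk through `o` which meets `o` exactly once in its interior and repeats no other
vertex. The parameter `r` is the number of intermediate vertices other than `o`, so the
walk has length `r + 2`. -/
def IsFigureEight (adj : V → V → Prop) (o : V) (v : Fin (r + 3) → V) : Prop :=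
  v 0 = o ∧ v (Fin.last (r + 2)) = o ∧
    (∀ k : Fin (r + 2), adj (v k.castSucc) (v k.succ)) ∧
    (∃! k : Fin (r + 3), 0 < (k : ℕ) ∧ (k : ℕ) < r + 2 ∧ v k = o) ∧
    (∀ k l : Fin (r + 3), k ≠ l → v k = v l → v k = o)

lemma isFigureEight_comp_iff {adj : V → V → Prop} {adj' : W → W → Prop} (f : adj ↪r adj') {o : V}
    {v : Fin (r + 3) → V} :
    IsFigureEight adj' (f o) (f ∘ v) ↔ IsFigureEight adj o v := by
  simp [IsFigureEight, f.injective.eq_iff, f.map_rel_iff]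

/-- The closed walk `o, u 0, …, u (j - 1), o, u j, …, u (r - 1), o`. -/
def figureEight (o : V) (j : Fin (r + 1)) (u : Fin r → V) : Fin (r + 3) → V :=
  j.castSucc.succ.insertNth o (Fin.cons o (Fin.snoc u o : Fin (r + 1) → V) : Fin (r + 2) → V)

/-- Step number `i` of a walk in which step number `j` is replaced by two steps through `o`. -/
def stepVia (adj : V → V → Prop) (o : V) (j i : ℕ) (x y : V) : Prop :=
  if i = j then adj x o ∧ adj o y else adj x y

instance (adj : V → V → Prop) [DecidableRel adj] (o : V) (j i : ℕ) :
    DecidableRel (stepVia adj o j i) :=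
  fun x y => inferInstanceAs (Decidable (if i = j then adj x o ∧ adj o y else adj x y))

lemma insertNth_adj_iff {adj : V → V → Prop} {o : V} {j : Fin (r + 1)} {x : Fin (r + 2) → V} :
    (∀ k : Fin (r + 2), adj ((j.castSucc.succ.insertNth o x : Fin (r + 3) → V) k.castSucc)
        ((j.castSucc.succ.insertNth o x : Fin (r + 3) → V) k.succ)) ↔
      ∀ i : Fin (r + 1), stepVia adj o j i (x i.castSucc) (x i.succ) := by
  set v : Fin (r + 3) → V := j.castSucc.succ.insertNth o x
  have hreturn : v j.castSucc.succ = o := Fin.insertNth_apply_same _ _ _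
  have hother (i : Fin (r + 2)) : v (j.castSucc.succ.succAbove i) = x i :=
    Fin.insertNth_apply_succAbove _ _ _ _
  have hleave : v j.castSucc.castSucc = x j.castSucc := by
    rw [← hother, Fin.succAbove_of_castSucc_lt _ _ (by simp)]
  have hsucc (i : Fin (r + 1)) : v (j.castSucc.succAbove i).succ = x i.succ := by
    rw [← Fin.succ_succAbove_succ, hother]
  have hcast (i : Fin (r + 1)) :
      v (j.castSucc.succAbove i).castSucc = if i = j then o else x i.castSucc := by
    split_ifs with h
    · rw [h, ← hreturn, Fin.succAbove_castSucc_self, Fin.succ_castSucc]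
    · rw [← hother]
      congr 1
      ext
      simp only [Fin.succAbove, Fin.lt_def, Fin.ext_iff] at h ⊢
      split_ifs <;> simp_all <;> omega
  rw [Fin.forall_iff_succAbove j.castSucc]
  simp only [hleave, hreturn, hsucc, hcast, stepVia, Fin.val_inj]
  constructor
  · rintro ⟨hto, hrest⟩ i
    specialize hrest i
    split_ifs at hrest ⊢ with hi
    · exact ⟨hi ▸ hto, hrest⟩
    · exact hrest
  · intro h
    have hj := h j
    rw [if_pos rfl] at hj
    refine ⟨hj.1, fun i => ?_⟩
    specialize h i
    split_ifs at h ⊢ with hi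
    · exact h.2
    · exact h

/-- The position of `u i` in `figureEight o j u`. -/
def innerIndex (j : Fin (r + 1)) (i : Fin r) : Fin (r + 3) :=
  j.castSucc.succ.succAbove i.castSucc.succ

lemma innerIndex_injective (j : Fin (r + 1)) : Function.Injective (innerIndex j) :=
  Fin.succAbove_right_injective.comp
    ((Fin.succ_injective _).comp (Fin.castSucc_injective _))

lemma innerIndex_pos (j : Fin (r + 1)) (i : Fin r) : 0 < (innerIndex j i : ℕ) :=
  Fin.succAbove_pos _ _ (Fin.succ_pos _)

lemma innerIndex_lt (j : Fin (r + 1)) (i : Fin r) : (innerIndex j i : ℕ) < r + 2 := by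
  simp only [innerIndex, Fin.succAbove]
  split_ifs <;> simp

lemma eq_innerIndex_of_ne {j : Fin (r + 1)} {k : Fin (r + 3)} (h0 : k ≠ 0)
    (hlast : k ≠ Fin.last (r + 2)) (hj : k ≠ j.castSucc.succ) : ∃ i, innerIndex j i = k := by
  obtain ⟨l, rfl⟩ := Fin.exists_succAbove_eq hj
  induction l using Fin.cases with
  | zero => simp at h0
  | succ l =>
    induction l using Fin.lastCases with
    | last => simp at hlast
    | cast i => exact ⟨i, rfl⟩

variable {o : V} {j : Fin (r + 1)} {u : Fin r → V}

lemma figureEight_zero : figureEight o j u 0 = o := by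
  have h := Fin.succ_succAbove_zero j.castSucc
  rw [figureEight, ← h, Fin.insertNth_apply_succAbove, Fin.cons_zero]

lemma figureEight_last : figureEight o j u (Fin.last (r + 2)) = o := by
  have h : j.castSucc.succ.succAbove (Fin.last (r + 1)) = Fin.last (r + 2) := by simp
  rw [figureEight, ← h, Fin.insertNth_apply_succAbove, ← Fin.succ_last, Fin.cons_succ,
    Fin.snoc_last]

lemma figureEight_return : figureEight o j u j.castSucc.succ = o :=
  Fin.insertNth_apply_same _ _ _

lemma figureEight_innerIndex (i : Fin r) : figureEight o j u (innerIndex j i) = u i := by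
  rw [figureEight, innerIndex, Fin.insertNth_apply_succAbove, Fin.cons_succ, Fin.snoc_castSucc]

lemma exists_innerIndex_of_figureEight_ne {k : Fin (r + 3)} (hk : figureEight o j u k ≠ o) :
    ∃ i, innerIndex j i = k := by
  refine eq_innerIndex_of_ne ?_ ?_ ?_ <;> rintro rfl
  exacts [hk figureEight_zero, hk figureEight_last, hk figureEight_return]

lemma eq_of_figureEight_eq (hu : ∀ i, u i ≠ o) {k : Fin (r + 3)} (hk : figureEight o j u k = o)
    (h0 : 0 < (k : ℕ)) (hlast : (k : ℕ) < r + 2) : k = j.castSucc.succ := by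
  by_contra hne
  obtain ⟨i, rfl⟩ := eq_innerIndex_of_ne (Fin.pos_iff_ne_zero.mp h0)
    (Fin.lt_last_iff_ne_last.mp hlast) hne
  rw [figureEight_innerIndex] at hk
  exact hu i hk

lemma figureEight_adj_iff {adj : V → V → Prop} :
    (∀ k : Fin (r + 2), adj (figureEight o j u k.castSucc) (figureEight o j u k.succ)) ↔
      ∀ i : Fin (r + 1), stepVia adj o j i ((Fin.cons o u : Fin (r + 1) → V) i)
        ((Fin.snoc u o : Fin (r + 1) → V) i) := by
  have hsource (i : Fin (r + 1)) : (Fin.cons o u : Fin (r + 1) → V) i =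
      (Fin.cons o (Fin.snoc u o : Fin (r + 1) → V) : Fin (r + 2) → V) i.castSucc := by
    have h := Fin.cons_snoc_eq_snoc_cons o u o
    rw [h, Fin.snoc_castSucc]
  simp only [figureEight, insertNth_adj_iff, hsource, Fin.cons_succ]

lemma isFigureEight_figureEight {adj : V → V → Prop}
    (h : IsTimedPath (stepVia adj o j) o 0 {o}ᶜ o u) :
    IsFigureEight adj o (figureEight o j u) := by
  obtain ⟨hinj, hu, hsteps⟩ := h
  simp only [zero_add] at hsteps
  refine ⟨figureEight_zero, figureEight_last, figureEight_adj_iff.mpr hsteps,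
    ⟨j.castSucc.succ, ⟨by simp, by simp; omega, figureEight_return⟩, ?_⟩, ?_⟩
  · rintro k ⟨h0, hlast, hk⟩
    exact eq_of_figureEight_eq hu hk h0 hlast
  · intro k l hkl h
    by_contra hk
    obtain ⟨i, rfl⟩ := exists_innerIndex_of_figureEight_ne hk
    obtain ⟨i', rfl⟩ := exists_innerIndex_of_figureEight_ne (h ▸ hk)
    rw [figureEight_innerIndex, figureEight_innerIndex] at h
    exact hkl (congrArg _ (hinj h))

lemma exists_figureEight_eq {adj : V → V → Prop} {v : Fin (r + 3) → V}
    (h : IsFigureEight adj o v) :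
    ∃ (j : Fin (r + 1)) (u : Fin r → V),
      IsTimedPath (stepVia adj o j) o 0 {o}ᶜ o u ∧ figureEight o j u = v := by
  obtain ⟨hzero, hlast, hadj, ⟨p, ⟨hp0, hpr, hp⟩, huniq⟩, hrep⟩ := h
  obtain ⟨j, rfl⟩ : ∃ j : Fin (r + 1), j.castSucc.succ = p :=
    ⟨⟨p - 1, by omega⟩, by ext; simp; omega⟩
  have hu : ∀ i, v (innerIndex j i) ≠ o := fun i hi =>
    Fin.succAbove_ne _ _ (huniq _ ⟨innerIndex_pos j i, innerIndex_lt j i, hi⟩)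
  have hv : figureEight o j (v ∘ innerIndex j) = v := by
    ext k
    by_cases hk : ∃ i, innerIndex j i = k
    · obtain ⟨i, rfl⟩ := hk
      exact figureEight_innerIndex i
    · rw [not_imp_comm.mp exists_innerIndex_of_figureEight_ne hk]
      contrapose! hk
      refine eq_innerIndex_of_ne ?_ ?_ ?_ <;> rintro rfl
      exacts [hk hzero.symm, hk hlast.symm, hk hp.symm]
  refine ⟨j, v ∘ innerIndex j, ⟨fun i i' h => ?_, hu, ?_⟩, hv⟩
  · by_contra hne
    exact hu i (hrep _ _ ((innerIndex_injective j).ne hne) h)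
  · simp only [zero_add, ← figureEight_adj_iff, hv]
    exact hadj

lemma figureEight_inj {j' : Fin (r + 1)} {u' : Fin r → V} (hu' : ∀ i, u' i ≠ o)
    (h : figureEight o j u = figureEight o j' u') : j = j' ∧ u = u' := by
  have hj : j = j' := by
    have hreturn : figureEight o j' u' j.castSucc.succ = o := h ▸ figureEight_return
    have hp := eq_of_figureEight_eq hu' hreturn (by simp) (by simp; omega)
    exact Fin.castSucc_injective _ (Fin.succ_injective _ hp)
  subst hj
  refine ⟨rfl, funext fun i => ?_⟩
  rw [← figureEight_innerIndex (o := o) (u := u), h, figureEight_innerIndex]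

lemma card_isFigureEight [Fintype V] [DecidableEq V] (adj : V → V → Prop) [DecidableRel adj]
    (o : V) (r : ℕ) :
    Nat.card {v : Fin (r + 3) → V // IsFigureEight adj o v} =
      ∑ j ∈ Finset.range (r + 1),
        timedPathCount (stepVia adj o j) o r 0 (Finset.univ.erase o) o := by
  have hcompl : ((Finset.univ.erase o : Finset V) : Set V) = {o}ᶜ := by ext; simp
  simp only [Finset.sum_range, ← card_isTimedPath, hcompl]
  rw [← Nat.card_sigma]
  refine (Nat.card_congr <| Equiv.ofBijective
    (fun x => ⟨figureEight o x.1 x.2.1, isFigureEight_figureEight x.2.2⟩) ⟨?_, ?_⟩).symm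
  · rintro ⟨j, u, hu⟩ ⟨j', u', hu'⟩ h
    obtain ⟨rfl, rfl⟩ := figureEight_inj hu'.2.1 (congrArg Subtype.val h)
    rfl
  · rintro ⟨v, hv⟩
    obtain ⟨j, u, hu, rfl⟩ := exists_figureEight_eq hv
    exact ⟨⟨j, u, hu⟩, rfl⟩

end FigureEight

section Polynomial

open Polynomial

lemma eq_of_natDegree_le_of_eval_natCast {R : Type*} [CommRing R] [IsDomain R] [CharZero R]
    {p q : R[X]} {d : ℕ} (hp : p.natDegree ≤ d) (hq : q.natDegree ≤ d)
    (h : ∀ k : ℕ, k ≤ d → p.eval (k : R) = q.eval (k : R)) : p = q := by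
  have hd : (d : WithBot ℕ) < (Finset.range (d + 1)).card := by
    rw [Finset.card_range]
    exact_mod_cast d.lt_succ_self
  exact eq_of_degrees_lt_of_eval_index_eq (v := Nat.cast) (Finset.range (d + 1))
    Nat.cast_injective.injOn ((degree_le_of_natDegree_le hp).trans_lt hd)
    ((degree_le_of_natDegree_le hq).trans_lt hd) fun k hk => h k (Finset.mem_range_succ_iff.mp hk)

lemma exists_polynomial_eval_eq_sum_choose {K : Type*} [Field K] [CharZero K] (g : ℕ → K) (d : ℕ) :
    ∃ p : K[X], p.natDegree ≤ d ∧
      ∀ m : ℕ, p.eval (m : K) = ∑ j ∈ Finset.range (d + 1), (m.choose j : K) * g j := by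
  refine ⟨∑ j ∈ Finset.range (d + 1), C (g j / j.factorial) * descPochhammer K j, ?_, ?_⟩
  · refine natDegree_sum_le_of_forall_le _ _ fun j hj => (natDegree_C_mul_le _ _).trans ?_
    rw [descPochhammer_natDegree]
    exact Finset.mem_range_succ_iff.mp hj
  · intro m
    simp only [eval_finsetSum, eval_C_mul, descPochhammer_eval_eq_descFactorial]
    refine Finset.sum_congr rfl fun j _ => ?_
    rw [Nat.descFactorial_eq_factorial_mul_choose]
    have hfac : (j.factorial : K) ≠ 0 := Nat.cast_ne_zero.mpr j.factorial_ne_zero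
    push_cast
    field_simp

end Polynomial

section AbsSupport

open scoped Polynomial

variable {ι : Type*}

/-- The odd extension to `ℤ` of a map `ℕ → ℕ` fixing `0`. -/
def oddExtend (e : ℕ → ℕ) (x : ℤ) : ℤ :=
  if 0 ≤ x then e x.natAbs else -(e x.natAbs)

lemma natAbs_oddExtend (e : ℕ → ℕ) (x : ℤ) : (oddExtend e x).natAbs = e x.natAbs := by
  unfold oddExtend
  split_ifs <;> simp

lemma oddExtend_nonneg_iff {e : ℕ → ℕ} (he : StrictMono e) (h0 : e 0 = 0) (x : ℤ) :
    0 ≤ oddExtend e x ↔ 0 ≤ x := by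
  unfold oddExtend
  split_ifs with h
  · simp [h]
  · have : e 0 < e x.natAbs := he (by omega)
    omega

lemma oddExtend_injective {e : ℕ → ℕ} (he : StrictMono e) (h0 : e 0 = 0) :
    Function.Injective (oddExtend e) := by
  intro x y h
  have habs : x.natAbs = y.natAbs := he.injective <| by
    rw [← natAbs_oddExtend e, ← natAbs_oddExtend e, h]
  have hsign : 0 ≤ x ↔ 0 ≤ y := by
    rw [← oddExtend_nonneg_iff he h0, h, oddExtend_nonneg_iff he h0]
  omega

lemma mem_range_oddExtend {e : ℕ → ℕ} (h0 : e 0 = 0) {x : ℤ} (hx : x.natAbs ∈ Set.range e) :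
    x ∈ Set.range (oddExtend e) := by
  obtain ⟨i, hi⟩ := hx
  rcases le_or_gt 0 x with h | h
  · exact ⟨i, by simp [oddExtend, hi, h]⟩
  · have : i ≠ 0 := by
      rintro rfl
      omega
    refine ⟨-i, ?_⟩
    simp only [oddExtend, Int.natAbs_neg, Int.natAbs_natCast, hi]
    split_ifs <;> omega

lemma exists_strictMono_image_Icc (S : Finset ℕ) (hS : 0 ∉ S) :
    ∃ e : ℕ → ℕ, StrictMono e ∧ e 0 = 0 ∧ (Finset.Icc 1 S.card).image e = S := by
  induction S using Finset.induction_on_max with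
  | empty => exact ⟨id, strictMono_id, rfl, by simp⟩
  | insert a S ha ih =>
    have haS : a ∉ S := fun h => lt_irrefl _ (ha a h)
    simp only [Finset.mem_insert, not_or] at hS
    obtain ⟨e, he, he0, heS⟩ := ih hS.2
    have hlt : e S.card < a := by
      rcases Nat.eq_zero_or_pos S.card with h | h
      · rw [h, he0]
        omega
      · refine ha _ ?_
        rw [← heS]
        exact Finset.mem_image_of_mem _ (Finset.mem_Icc.mpr ⟨by rwa [heS], by rw [heS]⟩)
    refine ⟨fun i => if i ≤ S.card then e i else a + (i - S.card - 1), ?_, by simp [he0], ?_⟩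
    · refine strictMono_nat_of_lt_succ fun i => ?_
      have := he (Nat.lt_succ_self i)
      rcases lt_trichotomy i S.card with h | h | h
      · simpa [h.le, Nat.succ_le_of_lt h] using this
      · simp [h, hlt]
      · rw [if_neg (by omega), if_neg (by omega)]
        omega
    · rw [Finset.card_insert_of_notMem haS, ← Finset.insert_Icc_right_eq_Icc_add_one (by omega),
        Finset.image_insert]
      congr 1
      · simp
      · conv_rhs => rw [← heS]
        refine Finset.image_congr fun i hi => ?_
        simp only [Finset.coe_Icc, Set.mem_Icc] at hi
        simp [hi.2]

lemma ncard_preimage_comp {α β : Type*} {f : α → β} (hf : Function.Injective f)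
    {F : Set (ι → β)} (hF : ∀ w ∈ F, ∀ k, w k ∈ Set.range f) :
    {v : ι → α | f ∘ v ∈ F}.ncard = F.ncard := by
  refine Set.ncard_preimage_of_injective_subset_range hf.comp_left fun w hw => ?_
  choose v hv using hF w hw
  exact ⟨v, funext hv⟩

variable [Fintype ι]

/-- The nonzero absolute values taken by `v`. -/
def absSupport (v : ι → ℤ) : Finset ℕ :=
  (Finset.univ.image fun k => (v k).natAbs).erase 0

lemma natAbs_mem_insert_absSupport (v : ι → ℤ) (k : ι) :
    (v k).natAbs ∈ insert 0 (absSupport v) := by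
  by_cases h : (v k).natAbs = 0 <;> simp [absSupport, h]

lemma absSupport_subset_Icc_iff {v : ι → ℤ} {m : ℕ} :
    absSupport v ⊆ Finset.Icc 1 m ↔ ∀ k, v k ∈ Set.Icc (-m : ℤ) m := by
  simp only [absSupport, Finset.subset_iff, Finset.mem_erase, Finset.mem_image, Finset.mem_univ,
    true_and, Finset.mem_Icc, Set.mem_Icc]
  constructor
  · intro h k
    by_cases hk : (v k).natAbs = 0
    · omega
    · have := h ⟨hk, k, rfl⟩
      omega
  · rintro h _ ⟨hk, k, rfl⟩
    have := h k
    omega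

lemma absSupport_oddExtend {e : ℕ → ℕ} (he : StrictMono e) (h0 : e 0 = 0) (v : ι → ℤ) :
    absSupport (oddExtend e ∘ v) = (absSupport v).image e := by
  conv_lhs => rw [absSupport, ← h0]
  simp only [absSupport, Function.comp_apply, natAbs_oddExtend, Finset.image_erase he.injective,
    Finset.image_image, Function.comp_def]

/-- Invariance of a set of integer maps under relabelling the absolute values monotonically,
keeping signs and zeros. -/
def IsRelabelInvariant (F : Set (ι → ℤ)) : Prop :=
  ∀ e : ℕ → ℕ, StrictMono e → e 0 = 0 → ∀ v, oddExtend e ∘ v ∈ F ↔ v ∈ F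

namespace IsRelabelInvariant

variable {F : Set (ι → ℤ)}

lemma ncard_absSupport_eq (hF : IsRelabelInvariant F) {S : Finset ℕ} (hS : 0 ∉ S) :
    {v ∈ F | absSupport v = S}.ncard = {v ∈ F | absSupport v = Finset.Icc 1 S.card}.ncard := by
  obtain ⟨e, he, h0, heS⟩ := exists_strictMono_image_Icc S hS
  rw [← ncard_preimage_comp (oddExtend_injective he h0)]
  · congr 1
    ext v
    have hv : absSupport (oddExtend e ∘ v) = S ↔ absSupport v = Finset.Icc 1 S.card := by
      conv_lhs => rw [absSupport_oddExtend he h0, ← heS]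
      exact (Finset.image_injective he.injective).eq_iff
    exact and_congr (hF e he h0 v) hv
  · rintro w ⟨-, hw⟩ k
    refine mem_range_oddExtend h0 ?_
    have hk := natAbs_mem_insert_absSupport w k
    rw [hw, ← heS, ← h0, ← Finset.image_insert] at hk
    obtain ⟨i, -, hi⟩ := Finset.mem_image.mp hk
    exact ⟨i, hi⟩

lemma ncard_box_eq_sum_choose (hF : IsRelabelInvariant F) (m : ℕ) :
    {v ∈ F | ∀ k, v k ∈ Set.Icc (-m : ℤ) m}.ncard =
      ∑ j ∈ Finset.range (m + 1), m.choose j * {v ∈ F | absSupport v = Finset.Icc 1 j}.ncard := by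
  classical
  have hfin : {v ∈ F | ∀ k, v k ∈ Set.Icc (-m : ℤ) m}.Finite :=
    (Set.Finite.pi' fun _ => Set.finite_Icc _ _).subset fun v hv => hv.2
  have hmaps : ∀ v ∈ hfin.toFinset, absSupport v ∈ (Finset.Icc 1 m).powerset := by
    simp +contextual [absSupport_subset_Icc_iff]
  have hfiber : ∀ S ∈ (Finset.Icc 1 m).powerset, ({v ∈ hfin.toFinset | absSupport v = S}).card =
      {v ∈ F | absSupport v = Finset.Icc 1 S.card}.ncard := by
    intro S hS
    rw [Finset.mem_powerset] at hS
    rw [← hF.ncard_absSupport_eq fun h => by simpa using hS h, ← Set.ncard_coe_finset]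
    congr 1
    ext v
    simp only [Finset.coe_filter, Set.Finite.mem_toFinset, Set.mem_ofPred_eq,
      ← absSupport_subset_Icc_iff]
    exact ⟨fun h => ⟨h.1.1, h.2⟩, fun h => ⟨⟨h.1, h.2 ▸ hS⟩, h.2⟩⟩
  rw [Set.ncard_eq_toFinset_card _ hfin, Finset.card_eq_sum_card_fiberwise hmaps,
    Finset.sum_congr rfl hfiber,
    Finset.sum_powerset_apply_card fun j => {v ∈ F | absSupport v = Finset.Icc 1 j}.ncard]
  simp

lemma exists_polynomial_ncard_box (hF : IsRelabelInvariant F) {d : ℕ}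
    (hd : ∀ v ∈ F, (absSupport v).card ≤ d) :
    ∃ p : ℚ[X], p.natDegree ≤ d ∧
      ∀ m : ℕ, p.eval (m : ℚ) = {v ∈ F | ∀ k, v k ∈ Set.Icc (-m : ℤ) m}.ncard := by
  set g : ℕ → ℕ := fun j => {v ∈ F | absSupport v = Finset.Icc 1 j}.ncard with hg
  obtain ⟨p, hdeg, hp⟩ := exists_polynomial_eval_eq_sum_choose (fun j => (g j : ℚ)) d
  have hg_zero : ∀ j, d < j → g j = 0 := by
    intro j hj
    have hempty : {v ∈ F | absSupport v = Finset.Icc 1 j} = ∅ := by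
      refine Set.eq_empty_of_forall_notMem fun v ⟨hv, hvj⟩ => ?_
      have := hd v hv
      rw [hvj, Nat.card_Icc] at this
      omega
    simp [hg, hempty]
  refine ⟨p, hdeg, fun m => ?_⟩
  have hsum : ∑ j ∈ Finset.range (d + 1), m.choose j * g j =
      ∑ j ∈ Finset.range (m + 1), m.choose j * g j := by
    rcases le_total d m with h | h
    · refine Finset.sum_subset (by simpa using h) fun j _ hj => ?_
      rw [hg_zero j (by simpa using hj), mul_zero]
    · refine (Finset.sum_subset (by simpa using h) fun j _ hj => ?_).symm
      rw [Nat.choose_eq_zero_of_lt (by simpa using hj), zero_mul]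
  rw [hp, hF.ncard_box_eq_sum_choose, ← hsum]
  push_cast
  rfl

end IsRelabelInvariant

end AbsSupport

section IntegerModel

/-- A tournament on `ℤ` whose restriction to `[-m, m]` is isomorphic to `RLT_{2m+1}`. It depends
only on the signs of the vertices and on the order of their absolute values. -/
def intAdj (x y : ℤ) : Prop :=
  if 0 ≤ x then x < y ∨ (-x ≤ y ∧ y < 0) else y < x ∨ (0 ≤ y ∧ y < -x)

lemma intAdj_oddExtend_iff {e : ℕ → ℕ} (he : StrictMono e) (h0 : e 0 = 0) (x y : ℤ) :
    intAdj (oddExtend e x) (oddExtend e y) ↔ intAdj x y := by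
  have hx := oddExtend_nonneg_iff he h0 x
  have hy := oddExtend_nonneg_iff he h0 y
  have hx' := natAbs_oddExtend e x
  have hy' := natAbs_oddExtend e y
  have hlt := he.lt_iff_lt (a := x.natAbs) (b := y.natAbs)
  have hgt := he.lt_iff_lt (a := y.natAbs) (b := x.natAbs)
  unfold intAdj
  split_ifs <;> omega

variable {r : ℕ}

lemma isRelabelInvariant_isFigureEight :
    IsRelabelInvariant {v : Fin (r + 3) → ℤ | IsFigureEight intAdj 0 v} := by
  intro e he h0 v
  let f : intAdj ↪r intAdj :=
    ⟨⟨oddExtend e, oddExtend_injective he h0⟩, intAdj_oddExtend_iff he h0 _ _⟩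
  have hf : f 0 = 0 := by simp [f, oddExtend, h0]
  have := isFigureEight_comp_iff f (o := 0) (v := v)
  rwa [hf] at this

lemma card_absSupport_le {adj : ℤ → ℤ → Prop} {v : Fin (r + 3) → ℤ}
    (hv : IsFigureEight adj 0 v) : (absSupport v).card ≤ r := by
  obtain ⟨j, u, -, rfl⟩ := exists_figureEight_eq hv
  have hsub : absSupport (figureEight 0 j u) ⊆ Finset.univ.image fun i => (u i).natAbs := by
    intro a ha
    simp only [absSupport, Finset.mem_erase, Finset.mem_image, Finset.mem_univ, true_and] at ha
    obtain ⟨ha, k, rfl⟩ := ha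
    obtain ⟨i, rfl⟩ := exists_innerIndex_of_figureEight_ne (Int.natAbs_ne_zero.mp ha)
    simp [figureEight_innerIndex]
  calc (absSupport (figureEight 0 j u)).card
      ≤ (Finset.univ.image fun i => (u i).natAbs).card := Finset.card_le_card hsub
    _ ≤ r := Finset.card_image_le.trans (by simp)

end IntegerModel

section RLT

open Polynomial

lemma rltAdj_iff_s6 (m : ℕ) (i j : ZMod (2 * m + 1)) :
    rltAdj (2 * m + 1) i j ↔
      (i.val < j.val ∧ j.val ≤ i.val + m) ∨ (j.val < i.val ∧ j.val + m < i.val) := by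
  have hi := ZMod.val_lt i
  have hm : (2 * m + 1 - 1) / 2 = m := by omega
  rw [rltAdj, hm, Finset.mem_Icc]
  rcases le_or_gt i.val j.val with h | h
  · rw [ZMod.val_sub h]
    omega
  · have hne : i - j ≠ 0 := by
      rintro h0
      rw [sub_eq_zero.mp h0] at h
      omega
    have : NeZero (i - j) := ⟨hne⟩
    rw [← neg_sub i j, ZMod.val_neg_of_ne_zero, ZMod.val_sub h.le]
    omega

/-- The representative of a residue in the integer model: the residues above `m` become
negative. -/
def rltToInt (m : ℕ) (a : ZMod (2 * m + 1)) : ℤ :=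
  if a.val ≤ m then a.val else m - a.val

lemma rltToInt_zero (m : ℕ) : rltToInt m 0 = 0 := by
  simp [rltToInt]

lemma rltToInt_injective (m : ℕ) : Function.Injective (rltToInt m) := by
  intro a b h
  refine ZMod.val_injective _ ?_
  unfold rltToInt at h
  split_ifs at h <;> omega

lemma range_rltToInt (m : ℕ) : Set.range (rltToInt m) = Set.Icc (-m : ℤ) m := by
  ext x
  rw [Set.mem_Icc]
  constructor
  · rintro ⟨a, rfl⟩
    have ha := ZMod.val_lt a
    unfold rltToInt
    split_ifs <;> omega
  · rintro ⟨hl, hr⟩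
    set k : ℕ := if 0 ≤ x then x.natAbs else m + x.natAbs with hk
    have hval : (k : ZMod (2 * m + 1)).val = k :=
      ZMod.val_cast_of_lt (by split_ifs at hk <;> omega)
    refine ⟨k, ?_⟩
    rw [rltToInt, hval]
    split_ifs at hk ⊢ <;> omega

lemma intAdj_rltToInt_iff {m : ℕ} (a b : ZMod (2 * m + 1)) :
    intAdj (rltToInt m a) (rltToInt m b) ↔ rltAdj (2 * m + 1) a b := by
  have ha := ZMod.val_lt a
  have hb := ZMod.val_lt b
  rw [rltAdj_iff_s6]
  unfold intAdj rltToInt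
  split_ifs <;> omega

lemma isFigureEight_rltToInt_iff {r m : ℕ} {v : Fin (r + 3) → ZMod (2 * m + 1)} :
    IsFigureEight intAdj 0 (rltToInt m ∘ v) ↔ IsFigureEight (rltAdj (2 * m + 1)) 0 v := by
  have h := isFigureEight_comp_iff (o := 0) (v := v)
    ⟨⟨rltToInt m, rltToInt_injective m⟩, intAdj_rltToInt_iff _ _⟩
  rwa [RelEmbedding.coe_mk, Function.Embedding.coeFn_mk, rltToInt_zero] at h

lemma exists_polynomial_card_isFigureEight_rltAdj (r : ℕ) :
    ∃ p : ℚ[X], p.natDegree ≤ r ∧ ∀ m : ℕ, p.eval (m : ℚ) =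
      Nat.card {v : Fin (r + 3) → ZMod (2 * m + 1) // IsFigureEight (rltAdj (2 * m + 1)) 0 v} := by
  obtain ⟨p, hdeg, hp⟩ :=
    isRelabelInvariant_isFigureEight.exists_polynomial_ncard_box
      fun (v : Fin (r + 3) → ℤ) hv => card_absSupport_le hv
  refine ⟨p, hdeg, fun m => ?_⟩
  rw [hp, ← ncard_preimage_comp (rltToInt_injective m), ← Nat.card_coe_set_eq]
  · congr! 4 with v
    have hbox : ∀ k, (rltToInt m ∘ v) k ∈ Set.Icc (-m : ℤ) m := fun k =>
      range_rltToInt m ▸ Set.mem_range_self (v k)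
    exact (and_iff_left hbox).trans isFigureEight_rltToInt_iff
  · rintro w ⟨-, hw⟩ k
    rw [range_rltToInt]
    exact hw k

-- Comparing with the endpoints keeps the evaluation from building the interval.
instance inst_s6 (n : ℕ) : DecidableRel (rltAdj n) := fun i j =>
  decidable_of_iff (1 ≤ (j - i).val ∧ (j - i).val ≤ (n - 1) / 2) Finset.mem_Icc.symm

set_option maxRecDepth 100000 in
lemma card_isFigureEight_rltAdj_of_le_six {m : ℕ} (hm : m ≤ 6) :
    (90 * Nat.card {v // IsFigureEight (r := 6) (rltAdj (2 * m + 1)) 0 v} : ℤ) =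
      (m + 1) * m * (m - 1) * (m - 2) * (85 * m ^ 2 - 238 * m + 69) := by
  rw [card_isFigureEight]
  interval_cases m <;> decide +kernel

lemma card_isFigureEight_rltAdj (m : ℕ) :
    (90 * Nat.card {v // IsFigureEight (r := 6) (rltAdj (2 * m + 1)) 0 v} : ℤ) =
      (m + 1) * m * (m - 1) * (m - 2) * (85 * m ^ 2 - 238 * m + 69) := by
  obtain ⟨p, hdeg, hp⟩ := exists_polynomial_card_isFigureEight_rltAdj 6
  set q : ℚ[X] := (X + 1) * X * (X - 1) * (X - 2) * (85 * X ^ 2 - 238 * X + 69) with hq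
  have hq_eval (k : ℕ) : q.eval (k : ℚ) =
      ((k + 1) * k * (k - 1) * (k - 2) * (85 * k ^ 2 - 238 * k + 69) : ℤ) := by
    simp [hq]
  have hpq : 90 * p = q := by
    refine eq_of_natDegree_le_of_eval_natCast (d := 6) (by compute_degree; exact hdeg)
      (by rw [hq]; compute_degree) fun k hk => ?_
    rw [hq_eval, ← card_isFigureEight_rltAdj_of_le_six hk]
    simp [hp]
  refine Int.cast_injective (α := ℚ) ?_
  rw [← hq_eval, ← hpq]
  simp [hp]

end RLT

/-- `c_8^{(2)}(RLT_n, 0)`: closed walks of length 8 starting and ending at `0`,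
containing exactly one occurrence of `0` as an intermediate vertex and no other
repeated vertices. -/
theorem closed_eight_walks_through_zero_of_RLT (n : ℕ) (hodd : Odd n) (hn : 1 ≤ n) :
    5760 * (Nat.card {v : Fin 9 → ZMod n //
        v 0 = 0 ∧ v 8 = 0 ∧
        (∀ k : Fin 8, rltAdj n (v k.castSucc) (v k.succ)) ∧
        (∃! k : Fin 9, 0 < (k : ℕ) ∧ (k : ℕ) < 8 ∧ v k = 0) ∧
        (∀ k l : Fin 9, k ≠ l → v k = v l → v k = 0)} : ℤ)
      = ((n : ℤ) + 1) * ((n : ℤ) - 1) * ((n : ℤ) - 3) * ((n : ℤ) - 5) *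
          (85 * (n : ℤ) ^ 2 - 646 * (n : ℤ) + 837) := by
  obtain ⟨m, rfl⟩ := hodd
  have h := card_isFigureEight_rltAdj m
  change 5760 * (Nat.card {v // IsFigureEight (r := 6) (rltAdj (2 * m + 1)) 0 v} : ℤ) = _
  push_cast
  linear_combination 64 * h
end
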